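/- arXiv:2305.00728 — 2 statements merged into one kernel-verified Lean document; each statement's English description precedes it below -/
import Mathlib

section
/- Compactness of bounded radial solutions: let 0 < γ < 2 and let u_n : (0,1) → ℝ be C² functions, uniformly bounded, satisfying F(D(u_n''(r), u_n'(r)/r)) = f_n(r)·r^{−γ} on (0,1), where each f_n : (0,1) → ℝ is continuous and the sequence {f_n} is uniformly bounded. If f_n converges uniformly on (0,1) to a function f which extends continuously to [0,1], then each u_n extends continuously to [0,1] and there exist a subsequence {u_{n_k}} and a function u, continuous on [0,1] and C² on (0,1), such that u_{n_k} converges uniformly on [0,1] to u and F(D(u''(r), u'(r)/r)) = f(r)·r^{−γ} for all r ∈ (0,1). -/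
open Set Real Filter MeasureTheory Matrix

noncomputable section

/-- The `N × N` diagonal matrix with first diagonal entry `a` and the remaining
`N - 1` diagonal entries equal to `b`. -/
def Dmat (N : ℕ) (a b : ℝ) : Matrix (Fin N) (Fin N) ℝ :=
  Matrix.diagonal (fun i => if (i : ℕ) = 0 then a else b)

/-- Uniform ellipticity with constants `0 < lam ≤ Lam`. -/
def UnifElliptic (N : ℕ) (lam Lam : ℝ) (F : Matrix (Fin N) (Fin N) ℝ → ℝ) : Prop :=
  ∀ M P : Matrix (Fin N) (Fin N) ℝ, M.IsSymm → P.PosSemidef →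
    lam * P.trace ≤ F (M + P) - F M ∧ F (M + P) - F M ≤ Lam * P.trace

/-- Rotation invariance. -/
def RotInvariant (N : ℕ) (F : Matrix (Fin N) (Fin N) ℝ → ℝ) : Prop :=
  ∀ O M : Matrix (Fin N) (Fin N) ℝ, Oᵀ * O = 1 → F (Oᵀ * M * O) = F M

/-- Positive one-homogeneity. -/
def PosHomog (N : ℕ) (F : Matrix (Fin N) (Fin N) ℝ → ℝ) : Prop :=
  ∀ t : ℝ, 0 < t → ∀ M : Matrix (Fin N) (Fin N) ℝ, F (t • M) = t * F M

/-- The radial principal eigenvalue `λ̄'_γ(F)` on the punctured unit ball. -/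
def radialEV (N : ℕ) (F : Matrix (Fin N) (Fin N) ℝ → ℝ) (γ : ℝ) : ℝ :=
  sSup {μ : ℝ | ∃ u : ℝ → ℝ, ContDiffOn ℝ 2 u (Ioo 0 1) ∧
    (∀ r ∈ Ioo (0:ℝ) 1, 0 < u r) ∧
    (∀ r ∈ Ioo (0:ℝ) 1,
      F (Dmat N (deriv (deriv u) r) (deriv u r / r)) + μ * u r * r ^ (-γ) ≤ 0)}

/-! Along the diagonal matrices, `F` becomes a function `G a b` of two variables that is strictly
increasing in `a`, so the equation can be solved for the second derivative:
`u'' = H(u' / r, f r^{-γ})` with `H` Lipschitz. Where `u' > 0`, ellipticity gives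
`u'' + κ u' / r ≤ K r^{-γ}` with `κ = (λ/Λ)(N - 1) ≥ 1`, that is, `r^κ (u' - A r^{1-γ})` is
nonincreasing for the right constant `A`. If it were positive somewhere, `u'` would be at least
`c / r` near the origin and `u` would be unbounded; hence `|u'| ≤ A r^{1-γ}`, and the equation
gives `|u''| ≤ B r^{-γ}`. Consequently `x ↦ u(x^{1/(2-γ)})` and `r ↦ r² u'(r)` are Lipschitz with
constants that do not depend on the solution. By the Arzelà–Ascoli theorem a subsequence converges
together with its first derivatives, and the solved form of the equation makes the second
derivatives converge as well. -/

open scoped Topology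

/-- The properties that `G a b = F (D(a, b))` inherits from a uniformly elliptic `F` with `F 0 = 0`.
The number `m` stands for `N - 1`, but need not be an integer. -/
structure RadiallyElliptic (lam Lam m : ℝ) (G : ℝ → ℝ → ℝ) : Prop where
  lam_pos : 0 < lam
  dim_nonneg : 0 ≤ m
  map_zero : G 0 0 = 0
  le_sub : ∀ ⦃a a' b b' : ℝ⦄, a ≤ a' → b ≤ b' →
    lam * ((a' - a) + m * (b' - b)) ≤ G a' b' - G a b
  sub_le : ∀ ⦃a a' b b' : ℝ⦄, a ≤ a' → b ≤ b' →
    G a' b' - G a b ≤ Lam * ((a' - a) + m * (b' - b))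

/-- `u` is a classical solution of `G(u'', u' / r) = f(r) r^{-γ}` on `(0, 1)`. -/
def IsRadialSolution (G : ℝ → ℝ → ℝ) (γ : ℝ) (f u : ℝ → ℝ) : Prop :=
  ContDiffOn ℝ 2 u (Ioo 0 1) ∧
    ∀ r ∈ Ioo (0 : ℝ) 1, G (deriv (deriv u) r) (deriv u r / r) = f r * r ^ (-γ)

section DiagonalMatrices

variable {N : ℕ} {F : Matrix (Fin N) (Fin N) ℝ → ℝ} {lam Lam : ℝ}

theorem Dmat_add (a b c d : ℝ) : Dmat N a b + Dmat N c d = Dmat N (a + c) (b + d) := by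
  simp only [Dmat, Matrix.diagonal_add, ite_add_ite]

theorem posSemidef_Dmat {a b : ℝ} (ha : 0 ≤ a) (hb : 0 ≤ b) : (Dmat N a b).PosSemidef :=
  Matrix.PosSemidef.diagonal fun i => by
    change 0 ≤ if (i : ℕ) = 0 then a else b
    split_ifs <;> assumption

theorem trace_Dmat (hN : 1 ≤ N) (a b : ℝ) : (Dmat N a b).trace = a + ((N : ℝ) - 1) * b := by
  obtain ⟨n, rfl⟩ := Nat.exists_eq_add_of_le' hN
  simp [Dmat, Matrix.trace_diagonal, Fin.sum_univ_succ]

theorem PosHomog.map_zero (hF : PosHomog N F) : F 0 = 0 := by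
  have h := hF 2 two_pos 0
  rw [smul_zero] at h
  linarith

theorem UnifElliptic.radiallyElliptic (hF : UnifElliptic N lam Lam F) (hN : 1 ≤ N)
    (hlam : 0 < lam) (hF0 : F 0 = 0) :
    RadiallyElliptic lam Lam ((N : ℝ) - 1) fun a b => F (Dmat N a b) := by
  have bounds : ∀ ⦃a a' b b' : ℝ⦄, a ≤ a' → b ≤ b' →
      lam * ((a' - a) + ((N : ℝ) - 1) * (b' - b)) ≤ F (Dmat N a' b') - F (Dmat N a b) ∧
      F (Dmat N a' b') - F (Dmat N a b) ≤ Lam * ((a' - a) + ((N : ℝ) - 1) * (b' - b)) := by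
    intro a a' b b' ha hb
    have h := hF (Dmat N a b) (Dmat N (a' - a) (b' - b)) (Matrix.isSymm_diagonal _)
      (posSemidef_Dmat (sub_nonneg.2 ha) (sub_nonneg.2 hb))
    rwa [Dmat_add, trace_Dmat hN, add_sub_cancel, add_sub_cancel] at h
  exact
    { lam_pos := hlam
      dim_nonneg := sub_nonneg.2 (by exact_mod_cast hN)
      map_zero := by simp [Dmat, hF0]
      le_sub := fun _ _ _ _ ha hb => (bounds ha hb).1
      sub_le := fun _ _ _ _ ha hb => (bounds ha hb).2 }

end DiagonalMatrices

namespace RadiallyElliptic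

variable {G : ℝ → ℝ → ℝ} {lam Lam m : ℝ}

theorem lam_le_Lam (hG : RadiallyElliptic lam Lam m G) : lam ≤ Lam := by
  have h := (hG.le_sub zero_le_one (le_refl 0)).trans (hG.sub_le zero_le_one (le_refl 0))
  simpa using h

theorem Lam_pos (hG : RadiallyElliptic lam Lam m G) : 0 < Lam :=
  hG.lam_pos.trans_le hG.lam_le_Lam

theorem dual (hG : RadiallyElliptic lam Lam m G) :
    RadiallyElliptic lam Lam m fun a b => -G (-a) (-b) where
  lam_pos := hG.lam_pos
  dim_nonneg := hG.dim_nonneg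
  map_zero := by simp [hG.map_zero]
  le_sub a a' b b' ha hb := by
    have h := hG.le_sub (neg_le_neg ha) (neg_le_neg hb)
    rwa [neg_sub_neg, neg_sub_neg, ← neg_sub_neg (G _ _)] at h
  sub_le a a' b b' ha hb := by
    have h := hG.sub_le (neg_le_neg ha) (neg_le_neg hb)
    rwa [neg_sub_neg, neg_sub_neg, ← neg_sub_neg (G _ _)] at h

theorem abs_sub_le_mul_add (hG : RadiallyElliptic lam Lam m G) (a a' b b' : ℝ) :
    |G a b - G a' b'| ≤ Lam * (|a - a'| + m * |b - b'|) := by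
  -- Both values are compared with the one at `(max a a', max b b')`.
  have one_sided : ∀ a a' b b' : ℝ, G a b - G a' b' ≤ Lam * (|a - a'| + m * |b - b'|) := by
    intro a a' b b'
    have max_sub_le : ∀ x y : ℝ, max x y - y ≤ |x - y| := fun x y =>
      sub_le_iff_le_add'.2 (max_le (sub_le_iff_le_add'.1 (le_abs_self _)) (by simp))
    have hm := hG.dim_nonneg
    have hL := hG.Lam_pos
    have hincrease : 0 ≤ lam * ((max a a' - a) + m * (max b b' - b)) :=
      mul_nonneg hG.lam_pos.le (add_nonneg (sub_nonneg.2 (le_max_left a a'))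
        (mul_nonneg hm (sub_nonneg.2 (le_max_left b b'))))
    calc G a b - G a' b' ≤ G (max a a') (max b b') - G a' b' := by
          linarith [hG.le_sub (le_max_left a a') (le_max_left b b')]
      _ ≤ Lam * ((max a a' - a') + m * (max b b' - b')) :=
          hG.sub_le (le_max_right a a') (le_max_right b b')
      _ ≤ Lam * (|a - a'| + m * |b - b'|) := by gcongr <;> exact max_sub_le _ _
  refine abs_sub_le_iff.2 ⟨one_sided a a' b b', ?_⟩
  simpa only [abs_sub_comm] using one_sided a' a b' b

theorem continuous_uncurry (hG : RadiallyElliptic lam Lam m G) :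
    Continuous (Function.uncurry G) := by
  refine (LipschitzWith.of_dist_le' (K := Lam * (1 + m)) ?_).continuous
  rintro ⟨a, b⟩ ⟨a', b'⟩
  have hm := hG.dim_nonneg
  have hL := hG.Lam_pos
  calc |G a b - G a' b'| ≤ Lam * (|a - a'| + m * |b - b'|) := hG.abs_sub_le_mul_add a a' b b'
    _ ≤ Lam * (max |a - a'| |b - b'| + m * max |a - a'| |b - b'|) := by
        gcongr
        exacts [le_max_left _ _, le_max_right _ _]
    _ = Lam * (1 + m) * max |a - a'| |b - b'| := by ring

theorem mul_abs_sub_le (hG : RadiallyElliptic lam Lam m G) (a a' b b' : ℝ) :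
    lam * |a - a'| ≤ |G a b - G a' b'| + Lam * m * |b - b'| := by
  have hfst : lam * |a - a'| ≤ |G a b - G a' b| := by
    wlog h : a' ≤ a generalizing a a'
    · simpa only [abs_sub_comm] using this a' a (le_of_not_ge h)
    have := hG.le_sub h (le_refl b)
    rw [sub_self, mul_zero, add_zero, ← abs_of_nonneg (sub_nonneg.2 h)] at this
    exact this.trans (le_abs_self _)
  have hsnd : |G a' b' - G a' b| ≤ Lam * m * |b - b'| := by
    simpa [abs_sub_comm b', mul_assoc] using hG.abs_sub_le_mul_add a' a' b' b
  linarith [abs_sub_le (G a b) (G a' b') (G a' b)]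

theorem surjective_left (hG : RadiallyElliptic lam Lam m G) (b : ℝ) :
    Function.Surjective fun a => G a b := by
  intro c
  set t := |c - G 0 b| / lam
  have ht0 : 0 ≤ t := div_nonneg (abs_nonneg _) hG.lam_pos.le
  have hlt : lam * t = |c - G 0 b| := mul_div_cancel₀ _ hG.lam_pos.ne'
  have hlower : G (-t) b ≤ c := by
    linarith [hG.le_sub (neg_nonpos.2 ht0) (le_refl b), neg_le_abs (c - G 0 b)]
  have hupper : c ≤ G t b := by
    linarith [hG.le_sub ht0 (le_refl b), le_abs_self (c - G 0 b)]
  have hcont : Continuous fun a => G a b :=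
    hG.continuous_uncurry.comp (continuous_id.prodMk continuous_const)
  obtain ⟨a, -, ha⟩ := intermediate_value_Icc (neg_le_self ht0) hcont.continuousOn
    ⟨hlower, hupper⟩
  exact ⟨a, ha⟩

theorem exists_solve_left (hG : RadiallyElliptic lam Lam m G) :
    ∃ H : ℝ × ℝ → ℝ, UniformContinuous H ∧ ∀ a b c, G a b = c ↔ a = H (b, c) := by
  choose H hH using hG.surjective_left
  have hm := hG.dim_nonneg
  have hL := hG.Lam_pos
  refine ⟨Function.uncurry H, ?_, fun a b c => ⟨?_, ?_⟩⟩
  · refine (LipschitzWith.of_dist_le' (K := (1 + Lam * m) / lam) ?_).uniformContinuous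
    rintro ⟨b, c⟩ ⟨b', c'⟩
    rw [div_mul_eq_mul_div, le_div_iff₀' hG.lam_pos]
    have h := hG.mul_abs_sub_le (H b c) (H b' c') b b'
    simp only [hH] at h
    calc lam * |H b c - H b' c'| ≤ |c - c'| + Lam * m * |b - b'| := h
      _ ≤ max |b - b'| |c - c'| + Lam * m * max |b - b'| |c - c'| := by
          gcongr
          exacts [le_max_right _ _, le_max_left _ _]
      _ = (1 + Lam * m) * max |b - b'| |c - c'| := by ring
  · rintro rfl
    have h := hG.mul_abs_sub_le a (H b (G a b)) b b
    simp only [hH, sub_self, abs_zero, mul_zero, add_zero] at h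
    exact sub_eq_zero.1 (abs_nonpos_iff.1 (nonpos_of_mul_nonpos_right h hG.lam_pos))
  · rintro rfl
    exact hH b c

theorem add_mul_le_abs_div (hG : RadiallyElliptic lam Lam m G) (a : ℝ) {b : ℝ} (hb : 0 ≤ b) :
    a + lam / Lam * m * b ≤ |G a b| / lam := by
  have hm := hG.dim_nonneg
  have hl := hG.lam_pos
  have hL := hG.Lam_pos
  have hle := le_abs_self (G a b)
  have h0 := hG.map_zero
  rcases le_total 0 a with ha | ha
  · have hlower := hG.le_sub ha hb
    have hratio : lam / Lam * (m * b) ≤ 1 * (m * b) := by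
      gcongr
      exact (div_le_one hL).2 hG.lam_le_Lam
    calc a + lam / Lam * m * b ≤ a + m * b := by linarith
      _ ≤ |G a b| / lam := (le_div_iff₀' hl).2 (by simp only [sub_zero] at hlower; linarith)
  · have hlower := hG.le_sub (le_refl a) hb
    have hupper := hG.sub_le ha (le_refl 0)
    calc a + lam / Lam * m * b = (Lam * a + lam * (m * b)) / Lam := by field_simp
      _ ≤ |G a b| / Lam := by
          gcongr
          simp only [sub_zero, sub_self, mul_zero, add_zero, zero_add, zero_sub] at hlower hupper
          linarith
      _ ≤ |G a b| / lam := by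
          gcongr
          exact hG.lam_le_Lam

end RadiallyElliptic

section GradientEstimate

theorem le_max_of_hasDerivAt_nonpos {f f' : ℝ → ℝ} {a b c : ℝ} (hab : a ≤ b)
    (hf : ∀ x ∈ Icc a b, HasDerivAt f (f' x) x) (hf' : ∀ x ∈ Icc a b, c < f x → f' x ≤ 0) :
    f b ≤ max (f a) c := by
  refine le_of_forall_pos_le_add fun ε hε => ?_
  -- A barrier with positive slope `δ` starting above `max (f a) c` cannot be crossed.
  set δ := ε / (1 + (b - a)) with hδ
  have hlength : 0 < 1 + (b - a) := by linarith
  have hδ0 : 0 < δ := div_pos hε hlength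
  have hbarrier : f b ≤ max (f a) c + δ * (1 + (b - a)) :=
    image_le_of_deriv_right_lt_deriv_boundary (B := fun x => max (f a) c + δ * (1 + (x - a)))
      (B' := fun _ => δ)
      (fun x hx => (hf x hx).continuousAt.continuousWithinAt)
      (fun x hx => (hf x (Ico_subset_Icc_self hx)).hasDerivWithinAt)
      (by simpa using (le_max_left (f a) c).trans (le_add_of_nonneg_right hδ0.le))
      (fun x => by
        simpa using ((((hasDerivAt_id x).sub_const a).const_add 1).const_mul δ).const_add
          (max (f a) c))
      (fun x hx hfx => by
        have habove : c < f x := by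
          rw [hfx]
          exact (le_max_right _ _).trans_lt
            (lt_add_of_pos_right _ (mul_pos hδ0 (by linarith [hx.1])))
        exact (hf' x (Ico_subset_Icc_self hx) habove).trans_lt hδ0)
      (right_mem_Icc.2 hab)
  rwa [hδ, div_mul_cancel₀ _ hlength.ne'] at hbarrier

theorem nonpos_of_div_le_deriv_of_bddBelow {u p : ℝ → ℝ} {R c C : ℝ} (hR : 0 < R)
    (hu : ∀ r ∈ Ioc 0 R, HasDerivAt u (p r) r) (hp : ∀ r ∈ Ioc 0 R, c / r ≤ p r)
    (hC : ∀ r ∈ Ioc 0 R, C ≤ u r) : c ≤ 0 := by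
  by_contra! hc
  have hderiv : ∀ r ∈ Ioc 0 R, HasDerivAt (fun r => u r - c * log r) (p r - c * r⁻¹) r :=
    fun r hr => (hu r hr).sub ((hasDerivAt_log hr.1.ne').const_mul c)
  have hmono : MonotoneOn (fun r => u r - c * log r) (Ioc 0 R) :=
    monotoneOn_of_hasDerivWithinAt_nonneg (convex_Ioc 0 R)
      (fun r hr => (hderiv r hr).continuousAt.continuousWithinAt)
      (fun r hr => (hderiv r (interior_subset hr)).hasDerivWithinAt)
      (fun r hr => sub_nonneg.2 (by simpa [div_eq_mul_inv] using hp r (interior_subset hr)))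
  have hlog := (tendsto_log_nhdsGT_zero.const_mul_atBot hc).eventually_lt_atBot
    (C - (u R - c * log R))
  obtain ⟨r, hlt, hr⟩ := (hlog.and (Ioc_mem_nhdsGT hR)).exists
  have hle : u r - c * log r ≤ u R - c * log R := hmono hr ⟨hR, le_rfl⟩ hr.2
  linarith [hC r hr]

theorem hasDerivAt_rpow_mul_sub {p : ℝ → ℝ} {p' r : ℝ} (κ γ A : ℝ) (hr : 0 < r)
    (hp : HasDerivAt p p' r) :
    HasDerivAt (fun r => r ^ κ * (p r - A * r ^ (1 - γ)))
      (r ^ κ * (p' + κ * (p r / r) - A * (κ + 1 - γ) * r ^ (-γ))) r := by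
  have hmul := (hasDerivAt_rpow_const (p := κ) (Or.inl hr.ne')).fun_mul
    (hp.fun_sub ((hasDerivAt_rpow_const (p := 1 - γ) (Or.inl hr.ne')).const_mul A))
  refine hmul.congr_deriv ?_
  have hγ : r ^ (1 - γ) = r * r ^ (-γ) := by
    rw [sub_eq_add_neg, rpow_add hr, rpow_one]
  rw [rpow_sub_one hr.ne', rpow_sub_one hr.ne', hγ]
  field_simp
  ring

theorem rpow_mul_sub_le_of_pos {p p' : ℝ → ℝ} {κ γ A s r : ℝ} (hA : 0 ≤ A) (hs : 0 < s)
    (hsr : s ≤ r) (hp : ∀ x ∈ Icc s r, HasDerivAt p (p' x) x)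
    (hode : ∀ x ∈ Icc s r, 0 < p x → p' x + κ * (p x / x) ≤ A * (κ + 1 - γ) * x ^ (-γ))
    (hpos : 0 < r ^ κ * (p r - A * r ^ (1 - γ))) :
    r ^ κ * (p r - A * r ^ (1 - γ)) ≤ s ^ κ * (p s - A * s ^ (1 - γ)) := by
  have hmax := le_max_of_hasDerivAt_nonpos (c := 0) hsr
    (fun x hx => hasDerivAt_rpow_mul_sub κ γ A (hs.trans_le hx.1) (hp x hx))
    (fun x hx hqx => by
      have hx0 := hs.trans_le hx.1
      have hpx : 0 < p x := (mul_nonneg hA (rpow_nonneg hx0.le _)).trans_lt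
        (sub_pos.1 (pos_of_mul_pos_right hqx (rpow_nonneg hx0.le κ)))
      exact mul_nonpos_of_nonneg_of_nonpos (rpow_nonneg hx0.le κ)
        (sub_nonpos.2 (hode x hx hpx)))
  exact (le_max_iff.1 hmax).resolve_right hpos.not_ge

theorem le_mul_rpow_of_add_mul_div_le {u p p' : ℝ → ℝ} {R κ γ K C : ℝ} (hκ : 1 ≤ κ)
    (hγ : γ < κ + 1) (hK : 0 ≤ K) (hu : ∀ r ∈ Ioo 0 R, HasDerivAt u (p r) r)
    (hp : ∀ r ∈ Ioo 0 R, HasDerivAt p (p' r) r)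
    (hode : ∀ r ∈ Ioo 0 R, 0 < p r → p' r + κ * (p r / r) ≤ K * r ^ (-γ))
    (hC : ∀ r ∈ Ioo 0 R, C ≤ u r) {r : ℝ} (hr : r ∈ Ioo 0 R) :
    p r ≤ K / (κ + 1 - γ) * r ^ (1 - γ) := by
  by_contra! hexceeds
  have hden : 0 < κ + 1 - γ := by linarith
  set A := K / (κ + 1 - γ)
  have hA0 : 0 ≤ A := div_nonneg hK hden.le
  have hAK : A * (κ + 1 - γ) = K := div_mul_cancel₀ _ hden.ne'
  set q : ℝ → ℝ := fun s => s ^ κ * (p s - A * s ^ (1 - γ))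
  have hqr : 0 < q r := mul_pos (rpow_pos_of_pos hr.1 κ) (sub_pos.2 hexceeds)
  have hsub : ∀ s ∈ Ioc 0 r, s ∈ Ioo 0 R := fun s hs => ⟨hs.1, hs.2.trans_lt hr.2⟩
  have hq_le : ∀ s ∈ Ioc 0 r, q r ≤ q s := by
    intro s hs
    have hmem : ∀ x ∈ Icc s r, x ∈ Ioo 0 R := fun x hx => hsub x ⟨hs.1.trans_le hx.1, hx.2⟩
    exact rpow_mul_sub_le_of_pos hA0 hs.1 hs.2 (fun x hx => hp x (hmem x hx))
      (fun x hx => hAK.symm ▸ hode x (hmem x hx)) hqr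
  have hp_ge : ∀ s ∈ Ioc 0 r, q r * r ^ (1 - κ) / s ≤ p s := by
    intro s hs
    have hsκ : 0 < s ^ κ := rpow_pos_of_pos hs.1 κ
    rw [div_le_iff₀ hs.1]
    refine le_of_mul_le_mul_right ?_ hsκ
    calc q r * r ^ (1 - κ) * s ^ κ ≤ q r * s ^ (1 - κ) * s ^ κ := by
          gcongr q r * ?_ * s ^ κ
          exact rpow_le_rpow_of_nonpos hs.1 hs.2 (by linarith)
      _ = q r * s := by
          rw [mul_assoc, ← rpow_add hs.1, sub_add_cancel, rpow_one]
      _ ≤ s ^ κ * p s * s := by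
          have := hs.1.le
          gcongr
          refine (hq_le s hs).trans (mul_le_mul_of_nonneg_left ?_ hsκ.le)
          exact sub_le_self _ (mul_nonneg hA0 (rpow_nonneg this _))
      _ = p s * s * s ^ κ := by ring
  have hnonpos := nonpos_of_div_le_deriv_of_bddBelow hr.1 (fun s hs => hu s (hsub s hs)) hp_ge
    (fun s hs => hC s (hsub s hs))
  exact hnonpos.not_gt (mul_pos hqr (rpow_pos_of_pos hr.1 _))

end GradientEstimate

theorem tendstoLocallyUniformlyOn_const {X Y ι : Type*} [TopologicalSpace X] [UniformSpace Y]
    (g : X → Y) (l : Filter ι) (s : Set X) : TendstoLocallyUniformlyOn (fun _ => g) g l s :=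
  fun _ hv _ _ => ⟨univ, univ_mem, .of_forall fun _ _ _ => refl_mem_uniformity hv⟩

namespace IsRadialSolution

variable {G : ℝ → ℝ → ℝ} {lam Lam m γ : ℝ} {f u : ℝ → ℝ}

theorem contDiffOn_deriv (hu : IsRadialSolution G γ f u) :
    ContDiffOn ℝ 1 (deriv u) (Ioo 0 1) :=
  ((contDiffOn_succ_iff_deriv_of_isOpen isOpen_Ioo).1 hu.1).2.2

theorem hasDerivAt (hu : IsRadialSolution G γ f u) {r : ℝ} (hr : r ∈ Ioo (0 : ℝ) 1) :
    HasDerivAt u (deriv u r) r :=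
  ((hu.1.contDiffAt (isOpen_Ioo.mem_nhds hr)).differentiableAt two_ne_zero).hasDerivAt

theorem hasDerivAt_deriv (hu : IsRadialSolution G γ f u) {r : ℝ} (hr : r ∈ Ioo (0 : ℝ) 1) :
    HasDerivAt (deriv u) (deriv (deriv u) r) r :=
  ((hu.contDiffOn_deriv.contDiffAt (isOpen_Ioo.mem_nhds hr)).differentiableAt
    one_ne_zero).hasDerivAt

theorem of_hasDerivAt {p q : ℝ → ℝ} (hu : ∀ r ∈ Ioo (0 : ℝ) 1, HasDerivAt u (p r) r)
    (hp : ∀ r ∈ Ioo (0 : ℝ) 1, HasDerivAt p (q r) r) (hq : ContinuousOn q (Ioo 0 1))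
    (heq : ∀ r ∈ Ioo (0 : ℝ) 1, G (q r) (p r / r) = f r * r ^ (-γ)) :
    IsRadialSolution G γ f u := by
  have hderiv : ∀ r ∈ Ioo (0 : ℝ) 1, deriv u r = p r := fun r hr => (hu r hr).deriv
  have hderiv2 : ∀ r ∈ Ioo (0 : ℝ) 1, HasDerivAt (deriv u) (q r) r := fun r hr =>
    (hp r hr).congr_of_eventuallyEq (eventually_of_mem (isOpen_Ioo.mem_nhds hr) hderiv)
  constructor
  · have hC1 : ContDiffOn ℝ 1 (deriv u) (Ioo 0 1) := by
      refine (contDiffOn_succ_iff_deriv_of_isOpen (n := 0) isOpen_Ioo).2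
        ⟨fun r hr => (hderiv2 r hr).differentiableAt.differentiableWithinAt, by simp, ?_⟩
      exact contDiffOn_zero.2 (hq.congr fun r hr => (hderiv2 r hr).deriv)
    exact (contDiffOn_succ_iff_deriv_of_isOpen (n := 1) isOpen_Ioo).2
      ⟨fun r hr => (hu r hr).differentiableAt.differentiableWithinAt, by simp, hC1⟩
  · intro r hr
    rw [(hderiv2 r hr).deriv, hderiv r hr, heq r hr]

theorem continuousOn_source (hu : IsRadialSolution G γ f u)
    (hG : RadiallyElliptic lam Lam m G) : ContinuousOn f (Ioo 0 1) := by
  have hcont : ContinuousOn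
      (fun r => G (deriv (deriv u) r) (deriv u r / r) * r ^ γ) (Ioo 0 1) := by
    refine (hG.continuous_uncurry.comp_continuousOn
      ((hu.contDiffOn_deriv.continuousOn_deriv_of_isOpen isOpen_Ioo le_rfl).prodMk
        (hu.contDiffOn_deriv.continuousOn.div continuousOn_id fun r hr => hr.1.ne'))).mul
      (continuousOn_id.rpow_const fun r hr => Or.inl hr.1.ne')
  refine hcont.congr fun r hr => ?_
  beta_reduce
  rw [hu.2 r hr, mul_assoc, ← rpow_add hr.1, neg_add_cancel, rpow_zero, mul_one]

theorem abs_operator_le (hu : IsRadialSolution G γ f u) {K : ℝ}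
    (hf : ∀ r ∈ Ioo (0 : ℝ) 1, |f r| ≤ K) {r : ℝ} (hr : r ∈ Ioo (0 : ℝ) 1) :
    |G (deriv (deriv u) r) (deriv u r / r)| ≤ K * r ^ (-γ) := by
  have hpow := rpow_nonneg hr.1.le (-γ)
  rw [hu.2 r hr, abs_mul, abs_of_nonneg hpow]
  exact mul_le_mul_of_nonneg_right (hf r hr) hpow

theorem abs_deriv_le (hu : IsRadialSolution G γ f u) (hG : RadiallyElliptic lam Lam m G)
    (hκ : 1 ≤ lam / Lam * m) (hγ : γ < 2) {K C : ℝ} (hf : ∀ r ∈ Ioo (0 : ℝ) 1, |f r| ≤ K)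
    (hC : ∀ r ∈ Ioo (0 : ℝ) 1, |u r| ≤ C) {r : ℝ} (hr : r ∈ Ioo (0 : ℝ) 1) :
    |deriv u r| ≤ K / lam / (lam / Lam * m + 1 - γ) * r ^ (1 - γ) := by
  have hl := hG.lam_pos
  have hK : 0 ≤ K / lam := div_nonneg ((abs_nonneg _).trans (hf r hr)) hl.le
  have hbound : ∀ r ∈ Ioo (0 : ℝ) 1,
      |G (deriv (deriv u) r) (deriv u r / r)| / lam ≤ K / lam * r ^ (-γ) := by
    intro r hr
    rw [div_mul_eq_mul_div]
    exact div_le_div_of_nonneg_right (hu.abs_operator_le hf hr) hl.le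
  have hupper : deriv u r ≤ K / lam / (lam / Lam * m + 1 - γ) * r ^ (1 - γ) :=
    le_mul_rpow_of_add_mul_div_le hκ (by linarith) hK (fun _ => hu.hasDerivAt)
      (fun _ => hu.hasDerivAt_deriv)
      (fun s hs hpos => (hG.add_mul_le_abs_div _ (div_pos hpos hs.1).le).trans (hbound s hs))
      (fun s hs => (abs_le.1 (hC s hs)).1) hr
  have hlower : -deriv u r ≤ K / lam / (lam / Lam * m + 1 - γ) * r ^ (1 - γ) :=
    le_mul_rpow_of_add_mul_div_le hκ (by linarith) hK (fun _ hs => (hu.hasDerivAt hs).neg)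
      (fun _ hs => (hu.hasDerivAt_deriv hs).neg)
      (fun s hs hpos => by
        have h := hG.dual.add_mul_le_abs_div (-deriv (deriv u) s) (div_pos hpos hs.1).le
        rw [neg_neg, abs_neg, neg_div, neg_neg] at h
        rw [neg_div]
        exact h.trans (hbound s hs))
      (fun s hs => neg_le_neg (abs_le.1 (hC s hs)).2) hr
  exact abs_le'.2 ⟨hupper, hlower⟩

theorem abs_deriv_deriv_le (hu : IsRadialSolution G γ f u) (hG : RadiallyElliptic lam Lam m G)
    {K A : ℝ} (hf : ∀ r ∈ Ioo (0 : ℝ) 1, |f r| ≤ K) {r : ℝ} (hr : r ∈ Ioo (0 : ℝ) 1)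
    (hA : |deriv u r| ≤ A * r ^ (1 - γ)) :
    |deriv (deriv u) r| ≤ (K + Lam * m * A) / lam * r ^ (-γ) := by
  have hm := hG.dim_nonneg
  have hL := hG.Lam_pos
  have hquot : |deriv u r / r| ≤ A * r ^ (-γ) := by
    rw [abs_div, abs_of_pos hr.1, div_le_iff₀ hr.1, mul_assoc, ← rpow_add_one hr.1.ne',
      neg_add_eq_sub]
    exact hA
  rw [div_mul_eq_mul_div, le_div_iff₀' hG.lam_pos]
  calc lam * |deriv (deriv u) r|
      ≤ |G (deriv (deriv u) r) (deriv u r / r)| + Lam * m * |deriv u r / r| := by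
        simpa [hG.map_zero] using hG.mul_abs_sub_le (deriv (deriv u) r) 0 (deriv u r / r) 0
    _ ≤ K * r ^ (-γ) + Lam * m * (A * r ^ (-γ)) := by
        gcongr
        exact hu.abs_operator_le hf hr
    _ = (K + Lam * m * A) * r ^ (-γ) := by ring

theorem of_tendsto {ι : Type*} {l : Filter ι} [l.NeBot] (hG : RadiallyElliptic lam Lam m G)
    {f u : ι → ℝ → ℝ} {f₀ u₀ p₀ : ℝ → ℝ} (hsol : ∀ i, IsRadialSolution G γ (f i) (u i))
    (hu : ∀ r ∈ Ioo (0 : ℝ) 1, Tendsto (fun i => u i r) l (𝓝 (u₀ r)))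
    (hp : TendstoLocallyUniformlyOn (fun i => deriv (u i)) p₀ l (Ioo 0 1))
    (hf : TendstoLocallyUniformlyOn f f₀ l (Ioo 0 1)) :
    IsRadialSolution G γ f₀ u₀ := by
  obtain ⟨H, hHc, hH⟩ := hG.exists_solve_left
  have hp_cont : ContinuousOn p₀ (Ioo 0 1) :=
    hp.continuousOn (Frequently.of_forall fun i => (hsol i).contDiffOn_deriv.continuousOn)
  have hf_cont : ContinuousOn f₀ (Ioo 0 1) :=
    hf.continuousOn (Frequently.of_forall fun i => (hsol i).continuousOn_source hG)
  have hpow_cont : ContinuousOn (fun r : ℝ => r ^ (-γ)) (Ioo 0 1) :=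
    continuousOn_id.rpow_const fun r hr => Or.inl hr.1.ne'
  set q₀ : ℝ → ℝ := fun r => H (p₀ r / r, f₀ r * r ^ (-γ))
  have hq : TendstoLocallyUniformlyOn (fun i => deriv (deriv (u i))) q₀ l (Ioo 0 1) :=
    (hHc.comp_tendstoLocallyUniformlyOn
      ((hp.fun_div₀ (tendstoLocallyUniformlyOn_const _ l _) hp_cont continuousOn_id
        fun r hr => hr.1.ne').prodMk
        (hf.fun_mul₀ (tendstoLocallyUniformlyOn_const _ l _) hf_cont hpow_cont))).congr
      fun i r hr => ((hH _ _ _).1 ((hsol i).2 r hr)).symm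
  have hu_deriv : ∀ r ∈ Ioo (0 : ℝ) 1, HasDerivAt u₀ (p₀ r) r := fun r hr =>
    hasDerivAt_of_tendstoLocallyUniformlyOn isOpen_Ioo hp
      (.of_forall fun i _ => (hsol i).hasDerivAt) hu hr
  have hp_deriv : ∀ r ∈ Ioo (0 : ℝ) 1, HasDerivAt p₀ (q₀ r) r := fun r hr =>
    hasDerivAt_of_tendstoLocallyUniformlyOn isOpen_Ioo hq
      (.of_forall fun i _ => (hsol i).hasDerivAt_deriv) (fun _ => hp.tendsto_at) hr
  have hq_cont : ContinuousOn q₀ (Ioo 0 1) := hHc.continuous.comp_continuousOn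
    ((hp_cont.div continuousOn_id fun r hr => hr.1.ne').prodMk (hf_cont.mul hpow_cont))
  exact of_hasDerivAt hu_deriv hp_deriv hq_cont fun r _ => (hH _ _ _).2 rfl

end IsRadialSolution

section Compactness

theorem exists_subseq_tendstoUniformlyOn_of_lipschitzOnWith {X E : Type*} [PseudoMetricSpace X]
    [MetricSpace E] {K : NNReal} {h : ℕ → X → E} {s : Set X} {t : Set E} (hs : IsCompact s)
    (ht : IsCompact t) (hl : ∀ n, LipschitzOnWith K (h n) s) (hst : ∀ n, MapsTo (h n) s t) :
    ∃ φ : ℕ → ℕ, StrictMono φ ∧ ∃ g : X → E, ContinuousOn g s ∧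
      TendstoUniformlyOn (fun k => h (φ k)) g atTop s := by
  have := isCompact_iff_compactSpace.1 hs
  let F : ℕ → BoundedContinuousFunction s E := fun n =>
    .mkOfCompact ⟨s.domRestrict (h n), (hl n).continuousOn.domRestrict⟩
  have hF : IsCompact (closure (range F)) := by
    refine BoundedContinuousFunction.arzela_ascoli t ht _ ?_ ?_
    · rintro _ x ⟨n, rfl⟩
      exact hst n x.2
    · refine (LipschitzWith.uniformEquicontinuous _ K ?_).equicontinuous
      rintro ⟨_, n, rfl⟩
      exact (hl n).to_restrict
  obtain ⟨F₀, -, φ, hφ, hlim⟩ := hF.tendsto_subseq fun n => subset_closure (mem_range_self n)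
  have hext : Function.extend Subtype.val F₀ (h 0) ∘ Subtype.val = F₀ :=
    Function.extend_comp Subtype.val_injective _ _
  refine ⟨φ, hφ, Function.extend Subtype.val F₀ (h 0), ?_, ?_⟩
  · rw [continuousOn_iff_continuous_domRestrict, domRestrict_eq, hext]
    exact F₀.continuous
  · rw [tendstoUniformlyOn_iff_tendstoUniformly_comp_coe, hext]
    exact BoundedContinuousFunction.tendsto_iff_tendstoUniformly.1 hlim

theorem exists_lipschitz_extension_subseq {X : Type*} [PseudoMetricSpace X] [ProperSpace X]
    {K : NNReal} {C : ℝ} {h : ℕ → X → ℝ} {s : Set X} (hs : Bornology.IsBounded s)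
    (hl : ∀ n, LipschitzOnWith K (h n) s) (hC : ∀ n, ∀ x ∈ s, |h n x| ≤ C) :
    ∃ H : ℕ → X → ℝ, (∀ n, Continuous (H n) ∧ EqOn (h n) (H n) s) ∧
      ∃ φ : ℕ → ℕ, StrictMono φ ∧ ∃ g : X → ℝ, ContinuousOn g (closure s) ∧
        TendstoUniformlyOn (fun k => H (φ k)) g atTop (closure s) := by
  choose H hHl hHe using fun n => (hl n).extend_real
  have hmaps : ∀ n, MapsTo (H n) (closure s) (Icc (-C) C) := fun n =>
    (show MapsTo (H n) s (Icc (-C) C) from fun x hx => by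
      rw [← hHe n hx]
      exact abs_le.1 (hC n x hx)).closure_left (hHl n).continuous isClosed_Icc
  exact ⟨H, fun n => ⟨(hHl n).continuous, hHe n⟩,
    exists_subseq_tendstoUniformlyOn_of_lipschitzOnWith hs.isCompact_closure isCompact_Icc
      (fun n => (hHl n).lipschitzOnWith) hmaps⟩

theorem lipschitzOnWith_comp_rpow_inv {u p : ℝ → ℝ} {α A : ℝ} (hα : 0 < α)
    (hu : ∀ r ∈ Ioo (0 : ℝ) 1, HasDerivAt u (p r) r)
    (hp : ∀ r ∈ Ioo (0 : ℝ) 1, |p r| ≤ A * r ^ (α - 1)) :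
    LipschitzOnWith (A / α).toNNReal (fun x => u (x ^ α⁻¹)) (Ioo 0 1) := by
  have hmem : ∀ x ∈ Ioo (0 : ℝ) 1, x ^ α⁻¹ ∈ Ioo (0 : ℝ) 1 := fun x hx =>
    ⟨rpow_pos_of_pos hx.1 _, rpow_lt_one hx.1.le hx.2 (inv_pos.2 hα)⟩
  refine (convex_Ioo 0 1).lipschitzOnWith_of_nnnorm_hasDerivWithin_le
    (f' := fun x => p (x ^ α⁻¹) * (α⁻¹ * x ^ (α⁻¹ - 1)))
    (fun x hx => ((hu _ (hmem x hx)).comp x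
      (hasDerivAt_rpow_const (Or.inl hx.1.ne'))).hasDerivWithinAt) fun x hx => ?_
  rw [← norm_toNNReal]
  refine toNNReal_le_toNNReal ?_
  have hpow : (x ^ α⁻¹) ^ (α - 1) * x ^ (α⁻¹ - 1) = 1 := by
    rw [← rpow_mul hx.1.le, ← rpow_add hx.1]
    convert rpow_zero x using 2
    field_simp
    ring
  have hweight : 0 ≤ α⁻¹ * x ^ (α⁻¹ - 1) := mul_nonneg (inv_pos.2 hα).le (rpow_nonneg hx.1.le _)
  calc |p (x ^ α⁻¹) * (α⁻¹ * x ^ (α⁻¹ - 1))| = |p (x ^ α⁻¹)| * (α⁻¹ * x ^ (α⁻¹ - 1)) := by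
        rw [abs_mul, abs_of_nonneg hweight]
    _ ≤ A * (x ^ α⁻¹) ^ (α - 1) * (α⁻¹ * x ^ (α⁻¹ - 1)) :=
        mul_le_mul_of_nonneg_right (hp _ (hmem x hx)) hweight
    _ = A / α * ((x ^ α⁻¹) ^ (α - 1) * x ^ (α⁻¹ - 1)) := by ring
    _ = A / α := by rw [hpow, mul_one]

theorem lipschitzOnWith_sq_mul {p p' : ℝ → ℝ} {γ A B : ℝ} (hγ : γ ≤ 2)
    (hp : ∀ r ∈ Ioo (0 : ℝ) 1, HasDerivAt p (p' r) r)
    (hpA : ∀ r ∈ Ioo (0 : ℝ) 1, |p r| ≤ A * r ^ (1 - γ))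
    (hpB : ∀ r ∈ Ioo (0 : ℝ) 1, |p' r| ≤ B * r ^ (-γ)) :
    LipschitzOnWith (2 * A + B).toNNReal (fun r => r ^ 2 * p r) (Ioo 0 1) := by
  refine (convex_Ioo 0 1).lipschitzOnWith_of_nnnorm_hasDerivWithin_le
    (f' := fun r => 2 * r * p r + r ^ 2 * p' r)
    (fun r hr => by
      simpa using ((hasDerivAt_pow 2 r).fun_mul (hp r hr)).hasDerivWithinAt)
    fun r hr => ?_
  rw [← norm_toNNReal]
  refine toNNReal_le_toNNReal ?_
  have hr0 := hr.1
  have hA : 0 ≤ A := (mul_nonneg_iff_of_pos_right (rpow_pos_of_pos hr0 _)).1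
    ((abs_nonneg _).trans (hpA r hr))
  have hB : 0 ≤ B := (mul_nonneg_iff_of_pos_right (rpow_pos_of_pos hr0 _)).1
    ((abs_nonneg _).trans (hpB r hr))
  have hone : r ^ (2 - γ) ≤ 1 := rpow_le_one hr.1.le hr.2.le (by linarith)
  have hpow₁ : r * r ^ (1 - γ) = r ^ (2 - γ) := by
    rw [show 2 - γ = 1 + (1 - γ) by ring, rpow_add hr.1, rpow_one]
  have hpow₂ : r ^ 2 * r ^ (-γ) = r ^ (2 - γ) := by
    rw [← rpow_two, ← rpow_add hr.1, sub_eq_add_neg]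
  calc |2 * r * p r + r ^ 2 * p' r| ≤ |2 * r * p r| + |r ^ 2 * p' r| := abs_add_le _ _
    _ = 2 * r * |p r| + r ^ 2 * |p' r| := by
        rw [abs_mul, abs_mul (r ^ 2), abs_of_pos (by positivity : 0 < 2 * r), abs_sq]
    _ ≤ 2 * r * (A * r ^ (1 - γ)) + r ^ 2 * (B * r ^ (-γ)) := by
        gcongr
        exacts [hpA r hr, hpB r hr]
    _ = (2 * A + B) * r ^ (2 - γ) := by
        linear_combination 2 * A * hpow₁ + B * hpow₂
    _ ≤ 2 * A + B := mul_le_of_le_one_right (by positivity) hone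

theorem exists_continuous_extension_subseq_of_deriv_bound {u p : ℕ → ℝ → ℝ} {α A C : ℝ}
    (hα : 0 < α) (hu : ∀ n, ∀ r ∈ Ioo (0 : ℝ) 1, HasDerivAt (u n) (p n r) r)
    (hp : ∀ n, ∀ r ∈ Ioo (0 : ℝ) 1, |p n r| ≤ A * r ^ (α - 1))
    (hC : ∀ n, ∀ r ∈ Ioo (0 : ℝ) 1, |u n r| ≤ C) :
    ∃ v : ℕ → ℝ → ℝ, (∀ n, ContinuousOn (v n) (Icc 0 1) ∧ EqOn (v n) (u n) (Ioo 0 1)) ∧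
      ∃ φ : ℕ → ℕ, StrictMono φ ∧ ∃ w : ℝ → ℝ, ContinuousOn w (Icc 0 1) ∧
        TendstoUniformlyOn (fun k => v (φ k)) w atTop (Icc 0 1) := by
  obtain ⟨V, hV, φ, hφ, W, hWc, hVW⟩ := exists_lipschitz_extension_subseq
    (Metric.isBounded_Ioo 0 1) (fun n => lipschitzOnWith_comp_rpow_inv hα (hu n) (hp n))
    (fun n x hx => hC n (x ^ α⁻¹)
      ⟨rpow_pos_of_pos hx.1 _, rpow_lt_one hx.1.le hx.2 (inv_pos.2 hα)⟩)
  rw [closure_Ioo zero_ne_one] at hWc hVW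
  have hpow_cont : Continuous fun r : ℝ => r ^ α := continuous_rpow_const hα.le
  have hpow_maps : MapsTo (fun r : ℝ => r ^ α) (Icc 0 1) (Icc 0 1) := fun r hr =>
    ⟨rpow_nonneg hr.1 _, rpow_le_one hr.1 hr.2 hα.le⟩
  refine ⟨fun n r => V n (r ^ α), fun n => ⟨((hV n).1.comp hpow_cont).continuousOn, ?_⟩, φ, hφ,
    fun r => W (r ^ α), hWc.comp hpow_cont.continuousOn hpow_maps,
    (hVW.comp fun r : ℝ => r ^ α).mono hpow_maps⟩
  intro r hr
  have h := (hV n).2 ⟨rpow_pos_of_pos hr.1 α, rpow_lt_one hr.1.le hr.2 hα⟩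
  simp only [rpow_rpow_inv hr.1.le hα.ne'] at h
  exact h.symm

theorem exists_subseq_tendstoLocallyUniformlyOn_of_abs_le_rpow {p p' : ℕ → ℝ → ℝ} {γ A B : ℝ}
    (hγ : γ ≤ 2) (hp : ∀ n, ∀ r ∈ Ioo (0 : ℝ) 1, HasDerivAt (p n) (p' n r) r)
    (hpA : ∀ n, ∀ r ∈ Ioo (0 : ℝ) 1, |p n r| ≤ A * r ^ (1 - γ))
    (hpB : ∀ n, ∀ r ∈ Ioo (0 : ℝ) 1, |p' n r| ≤ B * r ^ (-γ)) :
    ∃ φ : ℕ → ℕ, StrictMono φ ∧ ∃ p₀ : ℝ → ℝ,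
      TendstoLocallyUniformlyOn (fun k => p (φ k)) p₀ atTop (Ioo 0 1) := by
  have hbound : ∀ n, ∀ r ∈ Ioo (0 : ℝ) 1, |r ^ 2 * p n r| ≤ A := by
    intro n r hr
    have hA : 0 ≤ A := (mul_nonneg_iff_of_pos_right (rpow_pos_of_pos hr.1 _)).1
      ((abs_nonneg _).trans (hpA n r hr))
    have hone : r ^ (3 - γ) ≤ 1 := rpow_le_one hr.1.le hr.2.le (by linarith)
    have hpow : r ^ 2 * r ^ (1 - γ) = r ^ (3 - γ) := by
      rw [← rpow_two, ← rpow_add hr.1]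
      ring_nf
    calc |r ^ 2 * p n r| = r ^ 2 * |p n r| := by rw [abs_mul, abs_sq]
      _ ≤ r ^ 2 * (A * r ^ (1 - γ)) := by gcongr; exact hpA n r hr
      _ = A * r ^ (3 - γ) := by linear_combination A * hpow
      _ ≤ A := mul_le_of_le_one_right hA hone
  obtain ⟨P, hP, φ, hφ, P₀, hP₀, hPP₀⟩ := exists_lipschitz_extension_subseq
    (Metric.isBounded_Ioo 0 1)
    (fun n => lipschitzOnWith_sq_mul hγ (hp n) (hpA n) (hpB n)) hbound
  refine ⟨φ, hφ, fun r => P₀ r / r ^ 2, ?_⟩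
  refine ((hPP₀.mono subset_closure).tendstoLocallyUniformlyOn.fun_div₀
    (tendstoLocallyUniformlyOn_const (fun r : ℝ => r ^ 2) atTop _) (hP₀.mono subset_closure)
    (continuousOn_pow 2) fun r hr => (pow_pos hr.1 2).ne').congr fun k r hr => ?_
  beta_reduce
  rw [← (hP (φ k)).2 hr]
  exact mul_div_cancel_left₀ _ (pow_pos hr.1 2).ne'

end Compactness

theorem stmt12_general {G : ℝ → ℝ → ℝ} {lam Lam m γ : ℝ} (hG : RadiallyElliptic lam Lam m G)
    (hκ : 1 ≤ lam / Lam * m) (hγ : γ < 2) {u fn : ℕ → ℝ → ℝ} {f : ℝ → ℝ}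
    (hu : ∀ n, IsRadialSolution G γ (fn n) (u n))
    (hub : ∃ C : ℝ, ∀ n, ∀ r ∈ Ioo (0 : ℝ) 1, |u n r| ≤ C)
    (hfb : ∃ K : ℝ, ∀ n, ∀ r ∈ Ioo (0 : ℝ) 1, |fn n r| ≤ K)
    (hconv : TendstoUniformlyOn fn f atTop (Ioo 0 1)) :
    ∃ v : ℕ → ℝ → ℝ,
      (∀ n, ContinuousOn (v n) (Icc 0 1) ∧ EqOn (v n) (u n) (Ioo 0 1)) ∧
      ∃ φ : ℕ → ℕ, StrictMono φ ∧
        ∃ w : ℝ → ℝ, ContinuousOn w (Icc 0 1) ∧ IsRadialSolution G γ f w ∧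
          TendstoUniformlyOn (fun k => v (φ k)) w atTop (Icc 0 1) := by
  obtain ⟨C, hC⟩ := hub
  obtain ⟨K, hK⟩ := hfb
  set A := K / lam / (lam / Lam * m + 1 - γ)
  have hA : ∀ n, ∀ r ∈ Ioo (0 : ℝ) 1, |deriv (u n) r| ≤ A * r ^ (1 - γ) := fun n r hr =>
    (hu n).abs_deriv_le hG hκ hγ (hK n) (hC n) hr
  have hB : ∀ n, ∀ r ∈ Ioo (0 : ℝ) 1,
      |deriv (deriv (u n)) r| ≤ (K + Lam * m * A) / lam * r ^ (-γ) := fun n r hr =>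
    (hu n).abs_deriv_deriv_le hG (hK n) hr (hA n r hr)
  obtain ⟨v, hv, φ, hφ, w, hwc, hvw⟩ := exists_continuous_extension_subseq_of_deriv_bound
    (sub_pos.2 hγ) (fun n _ => (hu n).hasDerivAt)
    (fun n r hr => (hA n r hr).trans_eq (by ring_nf)) hC
  obtain ⟨ψ, hψ, p₀, hp₀⟩ := exists_subseq_tendstoLocallyUniformlyOn_of_abs_le_rpow
    hγ.le (fun k _ => (hu (φ k)).hasDerivAt_deriv) (fun k => hA (φ k)) (fun k => hB (φ k))
  have hvw' : TendstoUniformlyOn (fun k => v (φ (ψ k))) w atTop (Icc 0 1) :=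
    hvw.seq_tendstoUniformlyOn _ hψ.tendsto_atTop
  have hu_tendsto : ∀ r ∈ Ioo (0 : ℝ) 1, Tendsto (fun k => u (φ (ψ k)) r) atTop (𝓝 (w r)) :=
    fun r hr => (hvw'.tendsto_at (Ioo_subset_Icc_self hr)).congr fun k => (hv _).2 hr
  have hf : TendstoUniformlyOn (fun k => fn (φ (ψ k))) f atTop (Ioo 0 1) :=
    hconv.seq_tendstoUniformlyOn _ (hφ.comp hψ).tendsto_atTop
  exact ⟨v, hv, φ ∘ ψ, hφ.comp hψ, w, hwc,
    .of_tendsto hG (fun k => hu (φ (ψ k))) hu_tendsto hp₀ hf.tendstoLocallyUniformlyOn, hvw'⟩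

theorem stmt12 (N : ℕ) (hN : 2 ≤ N) (lam Lam : ℝ) (hlam : 0 < lam) (hlL : lam ≤ Lam)
    (hNp : 2 < lam / Lam * ((N : ℝ) - 1) + 1)
    (F : Matrix (Fin N) (Fin N) ℝ → ℝ)
    (hF1 : UnifElliptic N lam Lam F) (hF2 : RotInvariant N F) (hF3 : PosHomog N F)
    (γ : ℝ) (hγ0 : 0 < γ) (hγ2 : γ < 2)
    (u : ℕ → ℝ → ℝ) (hu2 : ∀ n, ContDiffOn ℝ 2 (u n) (Ioo 0 1))
    (hub : ∃ C : ℝ, ∀ n, ∀ r ∈ Ioo (0:ℝ) 1, |u n r| ≤ C)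
    (fn : ℕ → ℝ → ℝ) (hfc : ∀ n, ContinuousOn (fn n) (Ioo 0 1))
    (hfb : ∃ C : ℝ, ∀ n, ∀ r ∈ Ioo (0:ℝ) 1, |fn n r| ≤ C)
    (heq : ∀ n, ∀ r ∈ Ioo (0:ℝ) 1,
      F (Dmat N (deriv (deriv (u n)) r) (deriv (u n) r / r)) = fn n r * r ^ (-γ))
    (f : ℝ → ℝ) (hfcont : ContinuousOn f (Icc 0 1))
    (hconv : TendstoUniformlyOn fn f atTop (Ioo 0 1)) :
    ∃ v : ℕ → ℝ → ℝ,
      (∀ n, ContinuousOn (v n) (Icc 0 1) ∧ EqOn (v n) (u n) (Ioo 0 1)) ∧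
      ∃ φ : ℕ → ℕ, StrictMono φ ∧
        ∃ w : ℝ → ℝ, ContinuousOn w (Icc 0 1) ∧ ContDiffOn ℝ 2 w (Ioo 0 1) ∧
          TendstoUniformlyOn (fun k => v (φ k)) w atTop (Icc 0 1) ∧
          ∀ r ∈ Ioo (0:ℝ) 1,
            F (Dmat N (deriv (deriv w) r) (deriv w r / r)) = f r * r ^ (-γ) := by
  have hG := hF1.radiallyElliptic (by lia) hlam hF3.map_zero
  obtain ⟨v, hv, φ, hφ, w, hwc, hw, hvw⟩ :=
    stmt12_general hG (by linarith) hγ2 (fun n => ⟨hu2 n, heq n⟩) hub hfb hconv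
  exact ⟨v, hv, φ, hφ, w, hwc, hw.1, hvw, hw.2⟩

end
end

section
/- Global radial solution on the half-line: let 0 < γ < 2. There exists a C² function u : (0,∞) → ℝ satisfying the ODE u''(r) = M₊(−((N−1)/r)·K₊(u'(r)) − u(r)·r^{−γ}) for all r > 0 (equivalently 𝓜⁺[u](r) + u(r)·r^{−γ} = 0), such that lim_{r→0⁺} u(r) = 1, and there exists r̄ > 0 with u(r̄) = 0 and u(r) > 0 for all r ∈ (0, r̄). -/
open Set Real Filter MeasureTheory

noncomputable section

/-- The radial expression of the Pucci maximal operator `𝓜⁺` applied to a radial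
function `u = u(r)`. -/
def pucciP (lam Lam : ℝ) (N : ℕ) (u : ℝ → ℝ) (r : ℝ) : ℝ :=
  Lam * max (deriv (deriv u) r) 0 - lam * max (-(deriv (deriv u) r)) 0 +
  ((N : ℝ) - 1) * (Lam * max (deriv u r / r) 0 - lam * max (-(deriv u r / r)) 0)

/-- The radial expression of the Pucci minimal operator `𝓜⁻` applied to a radial
function `u = u(r)`. -/
def pucciM (lam Lam : ℝ) (N : ℕ) (u : ℝ → ℝ) (r : ℝ) : ℝ :=
  lam * max (deriv (deriv u) r) 0 - Lam * max (-(deriv (deriv u) r)) 0 +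
  ((N : ℝ) - 1) * (lam * max (deriv u r / r) 0 - Lam * max (-(deriv u r / r)) 0)

/-- The radial principal eigenvalue `λ̄'_γ` on the punctured unit ball for a radial
operator `Op`. -/
def radialEVop (Op : (ℝ → ℝ) → ℝ → ℝ) (γ : ℝ) : ℝ :=
  sSup {μ : ℝ | ∃ u : ℝ → ℝ, ContDiffOn ℝ 2 u (Ioo 0 1) ∧
    (∀ r ∈ Ioo (0:ℝ) 1, 0 < u r) ∧
    (∀ r ∈ Ioo (0:ℝ) 1, Op u r + μ * u r * r ^ (-γ) ≤ 0)}

/-- `K₊(s) = Λ·s` for `s ≥ 0` and `λ·s` for `s < 0`. -/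
def Kplus (lam Lam s : ℝ) : ℝ := if 0 ≤ s then Lam * s else lam * s

/-- `M₊(s) = s/Λ` for `s ≥ 0` and `s/λ` for `s < 0`. -/
def Mplus (lam Lam s : ℝ) : ℝ := if 0 ≤ s then s / Lam else s / lam

/-!
With `u(r) = U(r ^ β)`, `β = 2 - γ`, the equation becomes `x V' = F(V, U)`, `V = U'`, where `F` is
Lipschitz and, precisely because `γ < Ñ₊`, strictly decreasing in `V`. For large `n` the equivalent
form `x V' + (n + 1) V = F(V, U) + (n + 1) V`, integrated against `x ^ n`, is therefore a
fixed-point equation for a contraction in an exponentially weighted sup norm on the whole line.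

The solution satisfies `r² u'' + m r u' + q(r) u ≤ 0` with `q(r) = r ^ (2 - γ) / Λ → ∞`. Were it
eventually positive, `w = -r u' / u` would obey a Riccati inequality making the bounded function
`arctan w` grow like `log r`.
-/

open scoped Topology NNReal

section PowAverage

variable {E : Type*} [NormedAddCommGroup E] [NormedSpace ℝ E]

/-- The Hardy-type average `∫₀¹ θⁿ f(θx) dθ`. For `x ≠ 0` it equals `x^{-(n+1)} ∫₀ˣ yⁿ f(y) dy`,
hence inverts `v ↦ x v' + (n + 1) v`; the scaled form also makes sense at the singular
point `x = 0`. -/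
def powAverage (n : ℕ) (f : ℝ → E) (x : ℝ) : E :=
  ∫ θ in (0 : ℝ)..1, θ ^ n • f (θ * x)

lemma continuous_powAverage (n : ℕ) {f : ℝ → E} (hf : Continuous f) :
    Continuous (powAverage n f) := by
  apply intervalIntegral.continuous_parametric_intervalIntegral_of_continuous'
  simp only [Function.uncurry_def]
  fun_prop

lemma powAverage_sub (n : ℕ) {f g : ℝ → E} (hf : Continuous f) (hg : Continuous g) (x : ℝ) :
    powAverage n (fun y => f y - g y) x = powAverage n f x - powAverage n g x := by
  simp only [powAverage, smul_sub]
  exact intervalIntegral.integral_sub (Continuous.intervalIntegrable (by fun_prop) _ _)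
    (Continuous.intervalIntegrable (by fun_prop) _ _)

lemma norm_powAverage_le (n : ℕ) {f : ℝ → E} {x M : ℝ}
    (hf : ∀ θ ∈ Ioc (0 : ℝ) 1, ‖f (θ * x)‖ ≤ M) : ‖powAverage n f x‖ ≤ M / (n + 1) :=
  calc ‖powAverage n f x‖ ≤ ∫ θ in (0 : ℝ)..1, θ ^ n * M := by
        refine intervalIntegral.norm_integral_le_of_norm_le zero_le_one
          (ae_of_all _ fun θ hθ => ?_) (Continuous.intervalIntegrable (by fun_prop) _ _)
        rw [norm_smul, norm_of_nonneg (pow_nonneg hθ.1.le n)]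
        exact mul_le_mul_of_nonneg_left (hf θ hθ) (pow_nonneg hθ.1.le n)
    _ = M / (n + 1) := by
        rw [intervalIntegral.integral_mul_const, integral_pow, one_pow, zero_pow n.succ_ne_zero,
          sub_zero, one_div_mul_eq_div]

lemma pow_smul_powAverage (n : ℕ) (f : ℝ → E) (x : ℝ) :
    x ^ (n + 1) • powAverage n f x = ∫ y in (0 : ℝ)..x, y ^ n • f y := by
  have scale := intervalIntegral.smul_integral_comp_mul_right (a := 0) (b := 1)
    (fun y => y ^ n • f y) x
  rw [zero_mul, one_mul] at scale
  rw [← scale, pow_succ', mul_smul, powAverage, ← intervalIntegral.integral_smul]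
  simp only [mul_pow, smul_smul, mul_comm]

lemma hasDerivAt_powAverage [CompleteSpace E] (n : ℕ) {f : ℝ → E} (hf : Continuous f) {x : ℝ}
    (hx : x ≠ 0) :
    HasDerivAt (powAverage n f) (x⁻¹ • (f x - (n + 1 : ℝ) • powAverage n f x)) x := by
  have hprim : HasDerivAt (fun y => ∫ z in (0 : ℝ)..y, z ^ n • f z) (x ^ n • f x) x :=
    ((continuous_pow n).smul hf).integral_hasStrictDerivAt 0 x |>.hasDerivAt
  have hinv := (hasDerivAt_pow (n + 1) x).fun_inv (pow_ne_zero _ hx)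
  have heq : powAverage n f =ᶠ[𝓝 x]
      fun y => (y ^ (n + 1))⁻¹ • ∫ z in (0 : ℝ)..y, z ^ n • f z := by
    filter_upwards [isOpen_ne.mem_nhds hx] with y hy
    rw [← pow_smul_powAverage, inv_smul_smul₀ (pow_ne_zero _ hy)]
  refine ((hinv.fun_smul hprim).congr_of_eventuallyEq heq).congr_deriv ?_
  rw [← pow_smul_powAverage, smul_smul, smul_smul, smul_sub, smul_smul, sub_eq_add_neg, ← neg_smul]
  congr 2
  · field_simp
    exact (pow_succ x n).symm
  · push_cast [Nat.add_sub_cancel]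
    field_simp
    ring

lemma norm_integral_le_of_norm_le_exp {f : ℝ → E} {C k : ℝ} (hk : 0 < k)
    (hf : ∀ y, ‖f y‖ ≤ C * exp (k * |y|)) (x : ℝ) :
    ‖∫ y in (0 : ℝ)..x, f y‖ ≤ C / k * exp (k * |x|) := by
  have hC : 0 ≤ C := by simpa using (norm_nonneg _).trans (hf 0)
  have hexp (θ : ℝ) : HasDerivAt (fun θ => C / k * exp (k * |x| * θ))
      (|x| * (C * exp (k * |x| * θ))) θ := by
    refine (((hasDerivAt_id θ).const_mul (k * |x|)).exp.const_mul (C / k)).congr_deriv ?_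
    field_simp
    simp
  have hbound : ∀ θ ∈ Ioc (0 : ℝ) 1, ‖x • f (θ * x)‖ ≤ |x| * (C * exp (k * |x| * θ)) := by
    intro θ hθ
    have hfθ := hf (θ * x)
    rw [abs_mul, abs_of_pos hθ.1, mul_comm θ |x|, ← mul_assoc] at hfθ
    rw [norm_smul, Real.norm_eq_abs]
    exact mul_le_mul_of_nonneg_left hfθ (abs_nonneg x)
  calc ‖∫ y in (0 : ℝ)..x, f y‖ = ‖∫ θ in (0 : ℝ)..1, x • f (θ * x)‖ := by
        rw [intervalIntegral.integral_smul, intervalIntegral.smul_integral_comp_mul_right,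
          zero_mul, one_mul]
    _ ≤ ∫ θ in (0 : ℝ)..1, |x| * (C * exp (k * |x| * θ)) :=
        intervalIntegral.norm_integral_le_of_norm_le zero_le_one (ae_of_all _ hbound)
          (Continuous.intervalIntegrable (by fun_prop) _ _)
    _ = C / k * exp (k * |x| * 1) - C / k * exp (k * |x| * 0) :=
        intervalIntegral.integral_eq_sub_of_hasDerivAt (fun θ _ => hexp θ)
          (Continuous.intervalIntegrable (by fun_prop) _ _)
    _ ≤ C / k * exp (k * |x|) := by
        rw [mul_one]
        exact sub_le_self _ (by positivity)

end PowAverage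

lemma exists_fixedPoint_of_weighted_contraction {X E : Type*} [TopologicalSpace X]
    [NormedAddCommGroup E] [NormedSpace ℝ E] [CompleteSpace E] {w : X → ℝ} (hw : Continuous w)
    (hw0 : ∀ x, 0 < w x) {T : (X → E) → X → E} {q : ℝ≥0} (hq : q < 1)
    (hTc : ∀ v, Continuous v → Continuous (T v)) {C₀ : ℝ} (hT0 : ∀ x, ‖T 0 x‖ ≤ C₀ * w x)
    (hT : ∀ v₁ v₂, Continuous v₁ → Continuous v₂ → ∀ C, (∀ x, ‖v₁ x - v₂ x‖ ≤ C * w x) →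
      ∀ x, ‖T v₁ x - T v₂ x‖ ≤ q * C * w x) :
    ∃ v, Continuous v ∧ T v = v := by
  let W (b : BoundedContinuousFunction X E) (x : X) : E := w x • b x
  have hW (b) : Continuous (W b) := hw.smul b.continuous
  have hWsub (b c) (x) : ‖W b x - W c x‖ ≤ ‖b - c‖ * w x := by
    rw [← smul_sub, norm_smul, norm_of_nonneg (hw0 x).le, mul_comm]
    exact mul_le_mul_of_nonneg_right ((b - c).norm_coe_le_norm x) (hw0 x).le
  have hnorm (e : E) {x : X} {C : ℝ} (he : ‖e‖ ≤ C * w x) : ‖(w x)⁻¹ • e‖ ≤ C := by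
    rwa [norm_smul, norm_inv, norm_of_nonneg (hw0 x).le, inv_mul_le_iff₀ (hw0 x), mul_comm]
  have hbound (b) (x) : ‖T (W b) x‖ ≤ (q * ‖b‖ + C₀) * w x := by
    have h := hT (W b) 0 (hW b) continuous_zero ‖b‖ (by simpa [W] using hWsub b 0) x
    calc ‖T (W b) x‖ ≤ ‖T (W b) x - T 0 x‖ + ‖T 0 x‖ := norm_le_norm_sub_add _ _
      _ ≤ (q * ‖b‖ + C₀) * w x := by linarith [hT0 x]
  let S (b : BoundedContinuousFunction X E) : BoundedContinuousFunction X E :=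
    .ofNormedAddCommGroup (fun x => (w x)⁻¹ • T (W b) x)
      ((hw.inv₀ fun x => (hw0 x).ne').smul (hTc _ (hW b))) _ fun x => hnorm _ (hbound b x)
  have hS : ContractingWith q S := by
    refine ⟨hq, LipschitzWith.of_dist_le_mul fun b c => ?_⟩
    rw [dist_eq_norm, dist_eq_norm, BoundedContinuousFunction.norm_le (by positivity)]
    intro x
    change ‖(w x)⁻¹ • T (W b) x - (w x)⁻¹ • T (W c) x‖ ≤ _
    rw [← smul_sub]
    exact hnorm _ (hT _ _ (hW b) (hW c) _ (hWsub b c) x)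
  refine ⟨W (hS.fixedPoint S), hW _, funext fun x => ?_⟩
  have hfix : (w x)⁻¹ • T (W (hS.fixedPoint S)) x = hS.fixedPoint S x :=
    DFunLike.congr_fun hS.fixedPoint_isFixedPt x
  exact (inv_smul_eq_iff₀ (hw0 x).ne').1 hfix

section SingularCauchyProblem

variable {E : Type*} [NormedAddCommGroup E] [NormedSpace ℝ E]

/-- The right-hand side `Φ (v, u)` along a trajectory `u` with velocity `v` and initial value `u₀`,
as a function of `v` alone. -/
def velocityField (Φ : E × E → E) (u₀ : E) (v : ℝ → E) (y : ℝ) : E :=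
  Φ (v y, u₀ + ∫ t in (0 : ℝ)..y, v t)

lemma continuous_velocityField {Φ : E × E → E} (hΦ : Continuous Φ) (u₀ : E) {v : ℝ → E}
    (hv : Continuous v) : Continuous (velocityField Φ u₀ v) :=
  hΦ.comp (hv.prodMk (continuous_const.add
    (intervalIntegral.continuous_primitive (fun a b => hv.intervalIntegrable a b) 0)))

lemma norm_velocityField_sub_le {Φ : E × E → E} {A B : ℝ≥0} {k C : ℝ} (hk : 0 < k)
    (hΦ : ∀ p₁ p₂, ‖Φ p₁ - Φ p₂‖ ≤ A * ‖p₁.1 - p₂.1‖ + B * ‖p₁.2 - p₂.2‖) (u₀ : E)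
    {v₁ v₂ : ℝ → E} (hv₁ : Continuous v₁) (hv₂ : Continuous v₂)
    (hC : ∀ y, ‖v₁ y - v₂ y‖ ≤ C * exp (k * |y|)) (y : ℝ) :
    ‖velocityField Φ u₀ v₁ y - velocityField Φ u₀ v₂ y‖ ≤ (A + B / k) * C * exp (k * |y|) := by
  have hprim : ‖(u₀ + ∫ t in (0 : ℝ)..y, v₁ t) - (u₀ + ∫ t in (0 : ℝ)..y, v₂ t)‖ ≤
      C / k * exp (k * |y|) := by
    rw [add_sub_add_left_eq_sub, ← intervalIntegral.integral_sub (hv₁.intervalIntegrable _ _)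
      (hv₂.intervalIntegrable _ _)]
    exact norm_integral_le_of_norm_le_exp hk hC y
  calc ‖velocityField Φ u₀ v₁ y - velocityField Φ u₀ v₂ y‖
      ≤ A * ‖v₁ y - v₂ y‖ +
          B * ‖(u₀ + ∫ t in (0 : ℝ)..y, v₁ t) - (u₀ + ∫ t in (0 : ℝ)..y, v₂ t)‖ := hΦ (_, _) (_, _)
    _ ≤ A * (C * exp (k * |y|)) + B * (C / k * exp (k * |y|)) := by
        gcongr
        exact hC y
    _ = (A + B / k) * C * exp (k * |y|) := by ring

-- The weight `exp (k |x|)` makes the contribution of `∫ v` as small as `B / k`, so that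
-- `A < n + 1` alone gives a contraction on the whole line.
lemma exists_powAverage_fixedPoint [CompleteSpace E] {Φ : E × E → E} {A B : ℝ≥0} {n : ℕ}
    (hA : A < n + 1) (u₀ : E) (hΦc : Continuous Φ)
    (hΦ : ∀ p₁ p₂, ‖Φ p₁ - Φ p₂‖ ≤ A * ‖p₁.1 - p₂.1‖ + B * ‖p₁.2 - p₂.2‖) :
    ∃ v : ℝ → E, Continuous v ∧ powAverage n (velocityField Φ u₀ v) = v := by
  obtain ⟨k, hk, hkA⟩ : ∃ k : ℝ≥0, 0 < k ∧ A + B / k < n + 1 := by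
    obtain ⟨δ, hδ, hAδ⟩ := exists_pos_add_of_lt' hA
    refine ⟨(B + 1) / δ, by positivity, ?_⟩
    rw [← hAδ, div_div_eq_mul_div, mul_comm, mul_div_assoc]
    gcongr
    exact mul_lt_of_lt_one_right hδ ((div_lt_one (by positivity)).2 (lt_add_one B))
  refine exists_fixedPoint_of_weighted_contraction (w := fun x => exp (k * |x|)) (by fun_prop)
    (fun x => exp_pos _) (T := fun v => powAverage n (velocityField Φ u₀ v))
    (q := (A + B / k) / (n + 1)) (C₀ := ‖Φ (0, u₀)‖ / (n + 1))
    ((div_lt_one (by positivity)).2 hkA)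
    (fun v hv => continuous_powAverage n (continuous_velocityField hΦc u₀ hv)) (fun x => ?_)
    fun v₁ v₂ hv₁ hv₂ C hC x => ?_
  · have hzero : ‖powAverage n (velocityField Φ u₀ 0) x‖ ≤ ‖Φ (0, u₀)‖ / (n + 1) :=
      norm_powAverage_le n fun θ _ => by simp [velocityField]
    exact hzero.trans (le_mul_of_one_le_right (by positivity) (one_le_exp (by positivity)))
  · have hC0 : 0 ≤ C := by simpa using (norm_nonneg _).trans (hC 0)
    have hfield : ∀ θ ∈ Ioc (0 : ℝ) 1,
        ‖velocityField Φ u₀ v₁ (θ * x) - velocityField Φ u₀ v₂ (θ * x)‖ ≤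
          (A + B / k) * C * exp (k * |x|) := fun θ hθ => by
      refine (norm_velocityField_sub_le (NNReal.coe_pos.2 hk) hΦ u₀ hv₁ hv₂ hC _).trans ?_
      have hθx : |θ * x| ≤ |x| := by
        rw [abs_mul, abs_of_pos hθ.1]
        exact mul_le_of_le_one_left (abs_nonneg x) hθ.2
      gcongr
    rw [← powAverage_sub n (continuous_velocityField hΦc u₀ hv₁)
      (continuous_velocityField hΦc u₀ hv₂)]
    refine (norm_powAverage_le n hfield).trans_eq ?_
    push_cast
    ring

theorem exists_singular_cauchy_solution [CompleteSpace E] {Φ : E × E → E} {A B : ℝ≥0} {n : ℕ}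
    (hA : A < n + 1) (u₀ : E)
    (hΦ : ∀ p₁ p₂, ‖Φ p₁ - Φ p₂‖ ≤ A * ‖p₁.1 - p₂.1‖ + B * ‖p₁.2 - p₂.2‖) :
    ∃ u v : ℝ → E, Continuous v ∧ u 0 = u₀ ∧ (∀ x, HasDerivAt u (v x) x) ∧
      ∀ x ≠ 0, HasDerivAt v (x⁻¹ • (Φ (v x, u x) - (n + 1 : ℝ) • v x)) x := by
  have hΦc : Continuous Φ := by
    refine (LipschitzWith.of_dist_le_mul (K := A + B) fun p₁ p₂ => ?_).continuous
    rw [dist_eq_norm, dist_eq_norm, NNReal.coe_add, add_mul]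
    refine (hΦ p₁ p₂).trans ?_
    gcongr
    exacts [norm_fst_le (p₁ - p₂), norm_snd_le (p₁ - p₂)]
  obtain ⟨v, hv, hfix⟩ := exists_powAverage_fixedPoint hA u₀ hΦc hΦ
  have hu (x : ℝ) : HasDerivAt (fun y => u₀ + ∫ t in (0 : ℝ)..y, v t) (v x) x :=
    ((hv.integral_hasStrictDerivAt 0 x).hasDerivAt).const_add u₀
  refine ⟨_, v, hv, by simp, hu, fun x hx => ?_⟩
  have hderiv := hasDerivAt_powAverage n (continuous_velocityField hΦc u₀ hv) hx
  rwa [hfix] at hderiv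

end SingularCauchyProblem

section Pucci

lemma Mplus_eq_Kplus_inv (lam Lam : ℝ) : Mplus lam Lam = Kplus lam⁻¹ Lam⁻¹ := by
  ext s
  simp only [Mplus, Kplus, div_eq_inv_mul]

lemma Kplus_eq_max (lam Lam s : ℝ) : Kplus lam Lam s = Lam * max s 0 - lam * max (-s) 0 := by
  unfold Kplus
  split_ifs with hs
  · rw [max_eq_left hs, max_eq_right (neg_nonpos.2 hs)]
    ring
  · rw [max_eq_right (not_le.1 hs).le, max_eq_left (neg_nonneg.2 (not_le.1 hs).le)]
    ring

lemma continuous_Kplus (lam Lam : ℝ) : Continuous (Kplus lam Lam) := by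
  simp only [funext (Kplus_eq_max lam Lam)]
  fun_prop

lemma continuous_Mplus (lam Lam : ℝ) : Continuous (Mplus lam Lam) := by
  rw [Mplus_eq_Kplus_inv]
  exact continuous_Kplus _ _

lemma Kplus_mul_of_pos (lam Lam s : ℝ) {c : ℝ} (hc : 0 < c) :
    Kplus lam Lam (c * s) = c * Kplus lam Lam s := by
  simp only [Kplus, mul_nonneg_iff_of_pos_left hc]
  split_ifs <;> ring

lemma Mplus_mul_of_pos (lam Lam s : ℝ) {c : ℝ} (hc : 0 < c) :
    Mplus lam Lam (c * s) = c * Mplus lam Lam s := by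
  rw [Mplus_eq_Kplus_inv, Kplus_mul_of_pos _ _ _ hc]

lemma Kplus_Mplus {lam Lam : ℝ} (hlam : 0 < lam) (hLam : 0 < Lam) (s : ℝ) :
    Kplus lam Lam (Mplus lam Lam s) = s := by
  unfold Mplus
  split_ifs with hs
  · rw [Kplus, if_pos (div_nonneg hs hLam.le), mul_div_cancel₀ _ hLam.ne']
  · rw [Kplus, if_neg (div_neg_of_neg_of_pos (not_le.1 hs) hlam).not_ge,
      mul_div_cancel₀ _ hlam.ne']

lemma mul_le_Kplus {lam Lam : ℝ} (hlL : lam ≤ Lam) (s : ℝ) : lam * s ≤ Kplus lam Lam s := by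
  unfold Kplus
  split_ifs with hs
  exacts [mul_le_mul_of_nonneg_right hlL hs, le_rfl]

lemma Mplus_le_div {lam Lam : ℝ} (hlam : 0 < lam) (hlL : lam ≤ Lam) (s : ℝ) :
    Mplus lam Lam s ≤ s / Lam := by
  unfold Mplus
  split_ifs with hs
  · rfl
  · rw [div_le_div_iff₀ hlam (hlam.trans_le hlL)]
    exact mul_le_mul_of_nonpos_left hlL (not_le.1 hs).le

lemma exists_Kplus_sub_eq_mul (lam Lam y z : ℝ) :
    ∃ t ∈ uIcc lam Lam, Kplus lam Lam y - Kplus lam Lam z = t * (y - z) := by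
  wlog hzy : z ≤ y generalizing y z
  · obtain ⟨t, ht, h⟩ := this z y (le_of_not_ge hzy)
    exact ⟨t, ht, by linarith⟩
  unfold Kplus
  split_ifs with hy hz hz
  · exact ⟨Lam, right_mem_uIcc, by ring⟩
  · have hyz : 0 < y - z := by linarith
    have ht : -z / (y - z) * lam + y / (y - z) * Lam ∈ uIcc lam Lam := by
      rw [← segment_eq_uIcc]
      exact ⟨_, _, div_nonneg (by linarith) hyz.le, div_nonneg hy hyz.le, by field_simp; ring, rfl⟩
    exact ⟨_, ht, by field_simp; ring⟩
  · exact absurd (hz.trans hzy) hy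
  · exact ⟨lam, left_mem_uIcc, by ring⟩

lemma exists_Mplus_sub_eq_mul (lam Lam y z : ℝ) :
    ∃ t ∈ uIcc lam⁻¹ Lam⁻¹, Mplus lam Lam y - Mplus lam Lam z = t * (y - z) := by
  rw [Mplus_eq_Kplus_inv]
  exact exists_Kplus_sub_eq_mul _ _ y z

lemma pucciP_eq_Kplus (lam Lam : ℝ) (N : ℕ) (u : ℝ → ℝ) {r : ℝ} (hr : 0 < r) :
    pucciP lam Lam N u r =
      Kplus lam Lam (deriv (deriv u) r) + ((N : ℝ) - 1) / r * Kplus lam Lam (deriv u r) := by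
  rw [pucciP, ← Kplus_eq_max, ← Kplus_eq_max, div_eq_inv_mul (deriv u r),
    Kplus_mul_of_pos _ _ _ (inv_pos.2 hr)]
  ring

end Pucci

section RadialField

/-- The value of `u''(r)` that the radial equation with dimension `ν + 1` prescribes in terms of
`u = u(r)` and `v = u'(r)`. -/
def radialField (lam Lam ν γ r u v : ℝ) : ℝ :=
  Mplus lam Lam (-(ν / r) * Kplus lam Lam v - u * r ^ (-γ))

/-- The right-hand side of the first-order system `U' = V`, `x V' = regularField … (V, U)` which
the radial equation becomes under `u(r) = U(r ^ β)`, `β = 2 - γ`. -/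
def regularField (lam Lam ν β : ℝ) (p : ℝ × ℝ) : ℝ :=
  Mplus lam Lam (-(ν * β) * Kplus lam Lam p.1 - p.2) / β ^ 2 - (1 - 1 / β) * p.1

variable {lam Lam ν γ β : ℝ}

lemma continuousOn_radialField {s : Set ℝ} (hs : ∀ r ∈ s, r ≠ 0) {u v : ℝ → ℝ}
    (hu : ContinuousOn u s) (hv : ContinuousOn v s) :
    ContinuousOn (fun r => radialField lam Lam ν γ r (u r) (v r)) s := by
  have hpow : ContinuousOn (fun r : ℝ => r ^ (-γ)) s :=
    continuousOn_id.rpow_const fun r hr => Or.inl (hs r hr)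
  exact (continuous_Mplus lam Lam).comp_continuousOn (((continuousOn_const.div continuousOn_id
    hs).neg.mul ((continuous_Kplus lam Lam).comp_continuousOn hv)).sub (hu.mul hpow))

lemma Kplus_radialField (hlam : 0 < lam) (hlL : lam ≤ Lam) (r u v : ℝ) :
    Kplus lam Lam (radialField lam Lam ν γ r u v) + ν / r * Kplus lam Lam v + u * r ^ (-γ) = 0 := by
  rw [radialField, Kplus_Mplus hlam (hlam.trans_le hlL)]
  ring

lemma radialField_euler_le (hlam : 0 < lam) (hlL : lam ≤ Lam) (hν : 0 ≤ ν) {r : ℝ} (hr : 0 < r)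
    (u v : ℝ) :
    r ^ 2 * radialField lam Lam ν γ r u v + lam / Lam * ν * (r * v) +
      r ^ (2 - γ) / Lam * u ≤ 0 := by
  have hLam : 0 < Lam := hlam.trans_le hlL
  have hfield : radialField lam Lam ν γ r u v ≤
      (-(ν / r) * (lam * v) - u * r ^ (-γ)) / Lam := by
    refine (Mplus_le_div hlam hlL _).trans ?_
    rw [neg_mul, neg_mul]
    gcongr
    exact mul_le_Kplus hlL v
  have hpow : r ^ (2 - γ) = r ^ 2 * r ^ (-γ) := by
    rw [sub_eq_add_neg, rpow_add hr, rpow_two]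
  calc r ^ 2 * radialField lam Lam ν γ r u v + lam / Lam * ν * (r * v) + r ^ (2 - γ) / Lam * u
      ≤ r ^ 2 * ((-(ν / r) * (lam * v) - u * r ^ (-γ)) / Lam) + lam / Lam * ν * (r * v) +
          r ^ (2 - γ) / Lam * u := by gcongr
    _ = 0 := by
        rw [hpow]
        field_simp
        ring

lemma radialField_eq_regularField (hβ : 0 < β) {r : ℝ} (hr : 0 < r) (U V : ℝ) :
    radialField lam Lam ν (2 - β) r U (V * (β * r ^ (β - 1))) =
      (β ^ 2 * regularField lam Lam ν β (V, U) + β * (β - 1) * V) * r ^ (β - 2) := by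
  have hpow : r ^ (β - 1) = r ^ (β - 2) * r := by
    rw [← rpow_add_one hr.ne']
    congr 1
    ring
  have hscale : -(ν / r) * Kplus lam Lam (V * (β * r ^ (β - 1))) - U * r ^ (β - 2) =
      r ^ (β - 2) * (-(ν * β) * Kplus lam Lam V - U) := by
    rw [mul_comm V, Kplus_mul_of_pos _ _ _ (by positivity), hpow]
    field_simp
  rw [radialField, neg_sub, hscale, Mplus_mul_of_pos _ _ _ (by positivity), regularField]
  field_simp
  ring

lemma exists_regularField_sub_eq (hlam : 0 < lam) (hlL : lam ≤ Lam) (hν : 0 ≤ ν) (hβ : 0 < β)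
    (p₁ p₂ : ℝ × ℝ) :
    ∃ s ∈ Icc ((β - 1 + lam / Lam * ν) / β) ((β - 1 + Lam / lam * ν) / β),
      ∃ t ∈ Icc 0 (lam⁻¹ / β ^ 2), regularField lam Lam ν β p₁ - regularField lam Lam ν β p₂ =
        -(s * (p₁.1 - p₂.1)) - t * (p₁.2 - p₂.2) := by
  have hLam : 0 < Lam := hlam.trans_le hlL
  have hinv : Lam⁻¹ ≤ lam⁻¹ := inv_anti₀ hlam hlL
  obtain ⟨a, ha, hK⟩ := exists_Kplus_sub_eq_mul lam Lam p₁.1 p₂.1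
  obtain ⟨b, hb, hM⟩ := exists_Mplus_sub_eq_mul lam Lam
    (-(ν * β) * Kplus lam Lam p₁.1 - p₁.2) (-(ν * β) * Kplus lam Lam p₂.1 - p₂.2)
  rw [uIcc_of_le hlL] at ha
  rw [uIcc_of_ge hinv] at hb
  have ha0 : 0 ≤ a := hlam.le.trans ha.1
  have hb0 : 0 ≤ b := (inv_pos.2 hLam).le.trans hb.1
  refine ⟨(β - 1 + a * b * ν) / β, ⟨?_, ?_⟩, b / β ^ 2, ⟨by positivity, ?_⟩, ?_⟩
  · rw [div_eq_mul_inv lam]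
    gcongr
    exacts [ha.1, hb.1]
  · rw [div_eq_mul_inv Lam]
    gcongr
    exacts [ha.2, hb.2]
  · gcongr
    exact hb.2
  · calc regularField lam Lam ν β p₁ - regularField lam Lam ν β p₂
        = b * (-(ν * β) * (a * (p₁.1 - p₂.1)) - (p₁.2 - p₂.2)) / β ^ 2 -
            (1 - 1 / β) * (p₁.1 - p₂.1) := by
          rw [← hK]
          simp only [regularField]
          linear_combination hM / β ^ 2
      _ = -((β - 1 + a * b * ν) / β * (p₁.1 - p₂.1)) - b / β ^ 2 * (p₁.2 - p₂.2) := by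
          field_simp
          ring

-- Adding `(n + 1) v` with `n` above the steepest slope of the field makes it nondecreasing in `v`
-- with Lipschitz constant `n + 1 - κ`, where `κ > 0` is the least slope.
lemma exists_regular_solution (hlam : 0 < lam) (hlL : lam ≤ Lam) (hν : 0 ≤ ν) (hβ : 0 < β)
    (hβν : 0 < β - 1 + lam / Lam * ν) (u₀ : ℝ) :
    ∃ U V : ℝ → ℝ, U 0 = u₀ ∧ (∀ x, HasDerivAt U (V x) x) ∧
      ∀ x ≠ 0, HasDerivAt V (x⁻¹ * regularField lam Lam ν β (V x, U x)) x := by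
  let κ := (β - 1 + lam / Lam * ν) / β
  have hκ0 : 0 < κ := div_pos hβν hβ
  obtain ⟨n, hn⟩ := exists_nat_ge ((β - 1 + Lam / lam * ν) / β)
  have hκn : κ ≤ n + 1 := by
    obtain ⟨s, hs, -⟩ := exists_regularField_sub_eq hlam hlL hν hβ 0 0
    linarith [hs.1, hs.2]
  let Φ (p : ℝ × ℝ) : ℝ := (n + 1) * p.1 + regularField lam Lam ν β p
  have hΦ (p₁ p₂) : ‖Φ p₁ - Φ p₂‖ ≤ (⟨n + 1 - κ, sub_nonneg.2 hκn⟩ : ℝ≥0) * ‖p₁.1 - p₂.1‖ +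
      (⟨lam⁻¹ / β ^ 2, by positivity⟩ : ℝ≥0) * ‖p₁.2 - p₂.2‖ := by
    obtain ⟨s, hs, t, ht, hst⟩ := exists_regularField_sub_eq hlam hlL hν hβ p₁ p₂
    have hsub : Φ p₁ - Φ p₂ = (n + 1 - s) * (p₁.1 - p₂.1) - t * (p₁.2 - p₂.2) := by
      linear_combination hst
    rw [hsub]
    refine (norm_sub_le _ _).trans ?_
    rw [norm_mul, norm_mul, norm_of_nonneg ht.1, norm_of_nonneg (by linarith [hs.2])]
    exact add_le_add (mul_le_mul_of_nonneg_right (sub_le_sub_left hs.1 _) (norm_nonneg _))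
      (mul_le_mul_of_nonneg_right ht.2 (norm_nonneg _))
  have hA : (⟨n + 1 - κ, sub_nonneg.2 hκn⟩ : ℝ≥0) < n + 1 := sub_lt_self _ hκ0
  obtain ⟨U, V, -, hU0, hU, hV⟩ := exists_singular_cauchy_solution hA u₀ hΦ
  refine ⟨U, V, hU0, hU, fun x hx => (hV x hx).congr_deriv ?_⟩
  simp only [Φ, add_sub_cancel_left, smul_eq_mul]

theorem exists_radial_solution (hlam : 0 < lam) (hlL : lam ≤ Lam) (hν : 0 ≤ ν) (hγ : γ < 2)
    (hγν : γ < lam / Lam * ν + 1) (u₀ : ℝ) :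
    ∃ u v : ℝ → ℝ, Continuous u ∧ u 0 = u₀ ∧ (∀ r > 0, HasDerivAt u (v r) r) ∧
      ∀ r > 0, HasDerivAt v (radialField lam Lam ν γ r (u r) (v r)) r := by
  obtain ⟨β, rfl⟩ : ∃ β, γ = 2 - β := ⟨2 - γ, by ring⟩
  have hβ0 : 0 < β := by linarith
  obtain ⟨U, V, hU0, hU, hV⟩ :=
    exists_regular_solution hlam hlL hν hβ0 (by linarith) u₀
  have hUc : Continuous U := continuous_iff_continuousAt.2 fun x => (hU x).continuousAt
  have hpow (a : ℝ) {r : ℝ} (hr : 0 < r) : HasDerivAt (fun s : ℝ => s ^ a) (a * r ^ (a - 1)) r :=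
    hasDerivAt_rpow_const (Or.inl hr.ne')
  refine ⟨fun r => U (r ^ β), fun r => V (r ^ β) * (β * r ^ (β - 1)),
    hUc.comp (continuous_rpow_const hβ0.le), by simp [hβ0.ne', hU0],
    fun r hr => (hU _).comp r (hpow β hr), fun r hr => ?_⟩
  refine (((hV _ (rpow_pos_of_pos hr β).ne').comp r (hpow β hr)).mul
    ((hpow (β - 1) hr).const_mul β)).congr_deriv ?_
  have hpow₂ : r ^ (β - 1 - 1) = r ^ (β - 2) := by
    congr 1
    ring
  have hpow₁ : r ^ (β - 1) = r ^ (β - 2) * r := by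
    rw [← hpow₂, ← rpow_add_one hr.ne', sub_add_cancel]
  have hpow₀ : r ^ β = r ^ (β - 2) * r * r := by
    rw [← hpow₁, ← rpow_add_one hr.ne', sub_add_cancel]
  rw [Function.comp_apply, radialField_eq_regularField hβ0 hr]
  generalize regularField lam Lam ν β (V (r ^ β), U (r ^ β)) = F
  generalize V (r ^ β) = y
  rw [hpow₂, hpow₁, hpow₀]
  field_simp

end RadialField

section Oscillation

lemma frequently_mul_deriv_lt_one_add_sq {w w' : ℝ → ℝ} {c : ℝ} (hc : 0 < c)
    (hw : ∀ᶠ r in atTop, HasDerivAt w (w' r) r) :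
    ∃ᶠ r in atTop, r * w' r < c * (1 + w r ^ 2) := by
  intro hge
  obtain ⟨R, hR⟩ := eventually_atTop.1 ((eventually_gt_atTop 0).and (hw.and hge))
  have hderiv (r) (hr : R ≤ r) : HasDerivAt (fun s => arctan (w s) - c * log s)
      (1 / (1 + w r ^ 2) * w' r - c * r⁻¹) r :=
    (hR r hr).2.1.arctan.sub ((hasDerivAt_log (hR r hr).1.ne').const_mul c)
  have hmono : MonotoneOn (fun s => arctan (w s) - c * log s) (Ici R) := by
    refine monotoneOn_of_hasDerivWithinAt_nonneg (convex_Ici R)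
      (fun r hr => (hderiv r hr).continuousAt.continuousWithinAt)
      (fun r hr => (hderiv r (interior_subset hr)).hasDerivWithinAt) fun r hr => ?_
    obtain ⟨hr0, -, hge⟩ := hR r (interior_subset hr)
    rw [sub_nonneg, ← div_eq_mul_inv, one_div_mul_eq_div, div_le_div_iff₀ hr0 (by positivity),
      mul_comm (w' r)]
    exact not_lt.1 hge
  obtain ⟨r, hr, hlog⟩ := ((eventually_ge_atTop R).and
    ((tendsto_log_atTop.const_mul_atTop hc).eventually_gt_atTop
      (π / 2 - (arctan (w R) - c * log R)))).exists
  have hle : arctan (w R) - c * log R ≤ arctan (w r) - c * log r := hmono self_mem_Ici hr hr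
  linarith [arctan_lt_pi_div_two (w r)]

-- For positive `u` the function `w = -r u' / u` satisfies the Riccati inequality
-- `r w' ≥ w² + (1 - m) w + q`, which forces `w` to blow up at a finite radius.
theorem frequently_nonpos_of_euler_supersolution {u v a q : ℝ → ℝ} {m : ℝ}
    (hq : Tendsto q atTop atTop) (hu : ∀ᶠ r in atTop, HasDerivAt u (v r) r)
    (hv : ∀ᶠ r in atTop, HasDerivAt v (a r) r)
    (h : ∀ᶠ r in atTop, r ^ 2 * a r + m * (r * v r) + q r * u r ≤ 0) :
    ∃ᶠ r in atTop, u r ≤ 0 := by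
  intro hpos
  simp only [not_le] at hpos
  let w (r : ℝ) : ℝ := -(r * v r / u r)
  let w' (r : ℝ) : ℝ := -(((v r + r * a r) * u r - r * v r * v r) / u r ^ 2)
  have hw : ∀ᶠ r in atTop, HasDerivAt w (w' r) r := by
    filter_upwards [hpos, hu, hv] with r hur hu hv
    simpa using (((hasDerivAt_id r).fun_mul hv).fun_div hu hur.ne').fun_neg
  have hriccati : ∀ᶠ r in atTop, w r ^ 2 + (1 - m) * w r + q r ≤ r * w' r := by
    filter_upwards [hpos, h] with r hur h
    have hdiv : (r ^ 2 * a r + m * (r * v r) + q r * u r) / u r ≤ 0 :=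
      div_nonpos_of_nonpos_of_nonneg h hur.le
    have hgap : r * w' r - (w r ^ 2 + (1 - m) * w r + q r) =
        -((r ^ 2 * a r + m * (r * v r) + q r * u r) / u r) := by
      simp only [w, w']
      field_simp
      ring
    linarith
  refine frequently_mul_deriv_lt_one_add_sq one_half_pos hw ?_
  filter_upwards [hriccati, hq.eventually_ge_atTop ((1 + (1 - m) ^ 2) / 2)] with r hr hqr
  have hsquare : 0 ≤ (w r + (1 - m)) ^ 2 := sq_nonneg _
  linarith

lemma exists_first_zero {u : ℝ → ℝ} {a b : ℝ} (hu : ContinuousOn u (Icc a b))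
    (hab : a ≤ b) (ha : 0 < u a) (hb : u b ≤ 0) :
    ∃ c ∈ Ioc a b, u c = 0 ∧ ∀ x ∈ Ico a c, 0 < u x := by
  have hcompact : IsCompact (Icc a b ∩ u ⁻¹' Iic 0) :=
    isCompact_Icc.of_isClosed_subset (hu.preimage_isClosed_of_isClosed isClosed_Icc isClosed_Iic)
      inter_subset_left
  obtain ⟨c, ⟨hc, huc : u c ≤ 0⟩, hleast⟩ := hcompact.exists_isLeast ⟨b, right_mem_Icc.2 hab, hb⟩
  obtain ⟨d, hd, hud⟩ := intermediate_value_Icc' hc.1 (hu.mono (Icc_subset_Icc_right hc.2))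
    ⟨huc, ha.le⟩
  have hdc : d = c := hd.2.antisymm (hleast ⟨⟨hd.1, hd.2.trans hc.2⟩, hud.le⟩)
  refine ⟨c, ⟨hc.1.lt_of_ne ?_, hc.2⟩, hdc ▸ hud, fun x hx => ?_⟩
  · rintro rfl
    exact ha.not_ge huc
  · by_contra! hux
    exact hx.2.not_ge (hleast ⟨⟨hx.1, hx.2.le.trans hc.2⟩, hux⟩)

end Oscillation

lemma contDiffOn_two_of_hasDerivAt {u v a : ℝ → ℝ} {s : Set ℝ} (hs : IsOpen s)
    (hu : ∀ r ∈ s, HasDerivAt u (v r) r) (hv : ∀ r ∈ s, HasDerivAt v (a r) r)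
    (ha : ContinuousOn a s) : ContDiffOn ℝ 2 u s := by
  have hv1 : ContDiffOn ℝ (0 + 1) v s := by
    rw [contDiffOn_succ_iff_deriv_of_isOpen hs, contDiffOn_zero]
    exact ⟨fun r hr => (hv r hr).differentiableAt.differentiableWithinAt, by simp,
      ha.congr fun r hr => (hv r hr).deriv⟩
  rw [zero_add] at hv1
  rw [← one_add_one_eq_two, contDiffOn_succ_iff_deriv_of_isOpen hs]
  exact ⟨fun r hr => (hu r hr).differentiableAt.differentiableWithinAt, by simp,
    hv1.congr fun r hr => (hu r hr).deriv⟩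

theorem stmt16_general (N : ℕ) (hN : 1 ≤ N) (lam Lam : ℝ) (hlam : 0 < lam) (hlL : lam ≤ Lam)
    (γ : ℝ) (hγ2 : γ < 2) (hγN : γ < lam / Lam * ((N : ℝ) - 1) + 1) :
    ∃ u : ℝ → ℝ, ContDiffOn ℝ 2 u (Ioi 0) ∧
      (∀ r ∈ Ioi (0:ℝ),
        deriv (deriv u) r =
          Mplus lam Lam (-(((N : ℝ) - 1) / r) * Kplus lam Lam (deriv u r)
            - u r * r ^ (-γ))) ∧
      (∀ r ∈ Ioi (0:ℝ), pucciP lam Lam N u r + u r * r ^ (-γ) = 0) ∧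
      Tendsto u (nhdsWithin 0 (Ioi 0)) (nhds 1) ∧
      ∃ rbar : ℝ, 0 < rbar ∧ u rbar = 0 ∧ ∀ r ∈ Ioo 0 rbar, 0 < u r := by
  have hν : (0 : ℝ) ≤ N - 1 := sub_nonneg.2 (by exact_mod_cast hN)
  have hLam : 0 < Lam := hlam.trans_le hlL
  obtain ⟨u, v, hu, hu0, hu', hv'⟩ := exists_radial_solution hlam hlL hν hγ2 hγN 1
  have hode : ∀ r ∈ Ioi (0 : ℝ),
      deriv (deriv u) r = radialField lam Lam (N - 1) γ r (u r) (deriv u r) := fun r hr => by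
    have hdv : deriv u =ᶠ[𝓝 r] v := by
      filter_upwards [isOpen_Ioi.mem_nhds hr] with s hs using (hu' s hs).deriv
    rw [hdv.deriv_eq, hdv.eq_of_nhds, (hv' r hr).deriv]
  have hq : Tendsto (fun r : ℝ => r ^ (2 - γ) / Lam) atTop atTop :=
    (tendsto_rpow_atTop (sub_pos.2 hγ2)).atTop_div_const hLam
  have hnonpos : ∃ᶠ r in atTop, u r ≤ 0 :=
    frequently_nonpos_of_euler_supersolution hq ((eventually_gt_atTop 0).mono hu')
      ((eventually_gt_atTop 0).mono hv')
      ((eventually_gt_atTop 0).mono fun r hr => radialField_euler_le hlam hlL hν hr _ _)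
  obtain ⟨R, hR0, hR⟩ := (hnonpos.and_eventually (eventually_ge_atTop 0)).exists
  obtain ⟨rbar, hrbar, hzero, hpos⟩ :=
    exists_first_zero hu.continuousOn hR (hu0 ▸ one_pos) hR0
  refine ⟨u, ?_, hode, fun r hr => ?_, ?_, rbar, hrbar.1, hzero,
    fun r hr => hpos r (Ioo_subset_Ico_self hr)⟩
  · exact contDiffOn_two_of_hasDerivAt isOpen_Ioi hu' hv' (continuousOn_radialField
      (fun r hr => hr.ne') hu.continuousOn fun r hr => (hv' r hr).continuousAt.continuousWithinAt)
  · rw [pucciP_eq_Kplus lam Lam N u hr, hode r hr, Kplus_radialField hlam hlL]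
  · exact hu0 ▸ (hu.tendsto 0).mono_left nhdsWithin_le_nhds

theorem stmt16 (N : ℕ) (hN : 2 ≤ N) (lam Lam : ℝ) (hlam : 0 < lam) (hlL : lam ≤ Lam)
    (hNp : 2 < lam / Lam * ((N : ℝ) - 1) + 1)
    (γ : ℝ) (hγ0 : 0 < γ) (hγ2 : γ < 2) :
    ∃ u : ℝ → ℝ, ContDiffOn ℝ 2 u (Ioi 0) ∧
      (∀ r ∈ Ioi (0:ℝ),
        deriv (deriv u) r =
          Mplus lam Lam (-(((N : ℝ) - 1) / r) * Kplus lam Lam (deriv u r)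
            - u r * r ^ (-γ))) ∧
      (∀ r ∈ Ioi (0:ℝ), pucciP lam Lam N u r + u r * r ^ (-γ) = 0) ∧
      Tendsto u (nhdsWithin 0 (Ioi 0)) (nhds 1) ∧
      ∃ rbar : ℝ, 0 < rbar ∧ u rbar = 0 ∧ ∀ r ∈ Ioo 0 rbar, 0 < u r := by
  exact stmt16_general N (by lia) lam Lam hlam hlL γ hγ2 (by linarith)

end
end
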